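/- arXiv:math/0210332 — 2 statements merged into one kernel-verified Lean document; each statement's English description precedes it below -/
import Mathlib

section
/- Let a ∈ [0,1) and s* = 1/2 + a/2. For every b ∈ ℝ there is NO constant C > 0 such that the estimate ‖∂ₓ(u₁u₂)‖_{X^{−b}_{s*}} ≤ C ‖u₁‖_{X^b_{s*}} ‖u₂‖_{X^b_{s*}} holds for all Schwartz functions u₁, u₂ on ℝ². -/
/-!
The estimate fails because of the interaction of a very low frequency with a high frequency `N`.
For `|ξ₁| ≲ N^(-1-a)` and `ξ₂ ≈ N`, the resonance function `ω(ξ₁ + ξ₂) - ω(ξ₁) - ω(ξ₂)` is of size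
`|ξ₁| N^(1+a) ≲ 1`, so modulation gains nothing. With `δ ∼ N^(-1-a)`, let the Fourier transforms
of `u₁` and `u₂` be bumps on rectangles of size `δ × 1` centred at `(0, 0)` and at `(N, ω(N))`;
that of `u₁u₂`, up to a constant the convolution of the two, is `δ` times a bump on a rectangle of
the same size at `(N, ω(N))`. All three rectangles lie within distance `1` of the curve `λ = ω(ξ)`,
where only the cutoff `χ₀` is nonzero, so every norm is a weighted `L²` norm and `b` disappears.
Counting powers, `‖u₁‖ ≲ δ^(1/2)` and `‖u₂‖ ≲ N^s δ^(1/2)`, whereas `‖∂ₓ(u₁u₂)‖ ≳ N · N^s δ^(3/2)`.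
The estimate would thus force `N δ^(1/2) ∼ N^((1-a)/2)` to stay bounded, which is false for `a < 1`.
-/

open MeasureTheory Complex

noncomputable section

/-- The dispersive symbol `ω(ξ) = ξ |ξ|^(1+a)`. -/
def disp (a ξ : ℝ) : ℝ := ξ * |ξ| ^ (1 + a)

/-- Fourier transform on `ℝ`, convention `f̂(ξ) = ∫ e^{ixξ} f(x) dx`. -/
def FT1 (f : ℝ → ℂ) (ξ : ℝ) : ℂ :=
  ∫ x : ℝ, Complex.exp (Complex.I * ((x * ξ : ℝ) : ℂ)) * f x

/-- Spacetime Fourier transform, convention `f̂(ξ,λ) = ∫ e^{i(xξ+tλ)} f(x,t) dx dt`,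
for `f : ℝ × ℝ → ℂ` with first coordinate `x` (space) and second `t` (time). -/
def FT2 (f : ℝ × ℝ → ℂ) (ξ lam : ℝ) : ℂ :=
  ∫ p : ℝ × ℝ, Complex.exp (Complex.I * ((p.1 * ξ + p.2 * lam : ℝ) : ℂ)) * f p

/-- The dyadic cutoffs `χ_j`: `χ_0 = χ₀` and `χ_j(z) = χ(2^{-j} z)` for `j ≥ 1`. -/
def chiJ (χ₀ χ : ℝ → ℝ) (j : ℕ) (z : ℝ) : ℝ :=
  if j = 0 then χ₀ z else χ ((2 : ℝ) ^ (-(j : ℝ)) * z)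

/-- Hypotheses on the fixed dyadic cutoffs. -/
structure DyadicCutoffs (χ₀ χ : ℝ → ℝ) : Prop where
  smooth0 : ContDiff ℝ (⊤ : ℕ∞) χ₀
  even0 : ∀ z, χ₀ (-z) = χ₀ z
  mem0 : ∀ z, χ₀ z ∈ Set.Icc (0 : ℝ) 1
  supp0 : ∀ z, 2 < |z| → χ₀ z = 0
  one0 : ∀ z, |z| ≤ 1 → χ₀ z = 1
  smooth1 : ContDiff ℝ (⊤ : ℕ∞) χ
  even1 : ∀ z, χ (-z) = χ z
  mem1 : ∀ z, χ z ∈ Set.Icc (0 : ℝ) 1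
  supp1 : ∀ z, χ z ≠ 0 → 1 / 2 < |z| ∧ |z| < 2
  partition : ∀ z, ∑' j : ℕ, chiJ χ₀ χ j z = 1

/-- A smooth time cutoff supported in `[-1,1]`. -/
structure TimeCutoff (ψ : ℝ → ℝ) : Prop where
  smooth : ContDiff ℝ (⊤ : ℕ∞) ψ
  supp : ∀ t, ψ t ≠ 0 → |t| ≤ 1

/-- The norm `‖f‖_{X^b_s}`. -/
def Xnorm (a : ℝ) (χ₀ χ : ℝ → ℝ) (b s : ℝ) (f : ℝ × ℝ → ℂ) : ℝ :=
  ∑' j : ℕ, (2 : ℝ) ^ ((j : ℝ) * b) *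
    (∫ p : ℝ × ℝ, chiJ χ₀ χ j (p.2 - disp a p.1) * (1 + |p.1|) ^ (2 * s) *
      ‖FT2 f p.1 p.2‖ ^ 2) ^ ((1 : ℝ) / 2)

/-- The norm `‖f‖_{Y^b_{s₀,s₁}} = ‖x·f‖_{X^b_{s₀}} + ‖t·f‖_{X^b_{s₁}}`. -/
def Ynorm (a : ℝ) (χ₀ χ : ℝ → ℝ) (b s₀ s₁ : ℝ) (f : ℝ × ℝ → ℂ) : ℝ :=
  Xnorm a χ₀ χ b s₀ (fun p => (p.1 : ℂ) * f p) +
    Xnorm a χ₀ χ b s₁ (fun p => (p.2 : ℂ) * f p)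

/-- The norm `‖f‖_{Z^b_s} = ‖f‖_{X^b_s} + ‖f‖_{Y^b_{s-2s*,s}}`, where `s* = 1/2 + a/2`. -/
def Znorm (a : ℝ) (χ₀ χ : ℝ → ℝ) (b s : ℝ) (f : ℝ × ℝ → ℂ) : ℝ :=
  Xnorm a χ₀ χ b s f + Ynorm a χ₀ χ b (s - 2 * (1 / 2 + a / 2)) s f

/-- The norm `‖f‖_{X̃^b_s}`. -/
def XtildeNorm (a b s : ℝ) (f : ℝ × ℝ → ℂ) : ℝ :=
  (∫ p : ℝ × ℝ, (1 + |p.2 - disp a p.1|) ^ (2 * b) * (1 + |p.1|) ^ (2 * s) *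
    ‖FT2 f p.1 p.2‖ ^ 2) ^ ((1 : ℝ) / 2)

/-- The Sobolev norm `‖g‖_{H^s} = (∫ (1+|ξ|)^{2s} |ĝ(ξ)|² dξ)^{1/2}`. -/
def Hnorm (s : ℝ) (g : ℝ → ℂ) : ℝ :=
  (∫ ξ : ℝ, (1 + |ξ|) ^ (2 * s) * ‖FT1 g ξ‖ ^ 2) ^ ((1 : ℝ) / 2)

/-- The weighted norm `‖g‖_{F^s} = ‖g‖_{H^s} + ‖x·g‖_{H^{s-2s*}}` (here `sstar = s*`). -/
def Fnorm (sstar s : ℝ) (g : ℝ → ℂ) : ℝ :=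
  Hnorm s g + Hnorm (s - 2 * sstar) (fun x => (x : ℂ) * g x)

/-- The `L^p` norm `(∫ ‖f‖^p)^{1/p}`. -/
def Lpnorm {α : Type*} [MeasureSpace α] {E : Type*} [NormedAddCommGroup E]
    (p : ℝ) (f : α → E) : ℝ :=
  (∫ x, ‖f x‖ ^ p) ^ (1 / p)

/-- The linear propagator `W(t)`, defined via Fourier inversion so that its Fourier
transform in `x` is `e^{itω(ξ)} û₀(ξ)`. -/
def Wgrp (a : ℝ) (u₀ : ℝ → ℂ) (t x : ℝ) : ℂ :=
  ((1 / (2 * Real.pi) : ℝ) : ℂ) *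
    ∫ ξ : ℝ, Complex.exp (-(Complex.I * ((x * ξ : ℝ) : ℂ))) *
      (Complex.exp (Complex.I * ((t * disp a ξ : ℝ) : ℂ)) * FT1 u₀ ξ)

/-- The Fourier multiplier `D^σ` with symbol `|ξ|^σ`, via Fourier inversion. -/
def Dop (σ : ℝ) (g : ℝ → ℂ) (x : ℝ) : ℂ :=
  ((1 / (2 * Real.pi) : ℝ) : ℂ) *
    ∫ ξ : ℝ, Complex.exp (-(Complex.I * ((x * ξ : ℝ) : ℂ))) *
      (((|ξ| ^ σ : ℝ) : ℂ) * FT1 g ξ)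

open scoped SchwartzMap FourierTransform LineDeriv ContDiff Convolution
open SchwartzMap (compCLMOfContinuousLinearEquiv)

/-! ### The space-time Fourier transform on Schwartz functions -/

/-- The space derivative `∂ₓ` on Schwartz functions of `(x, t)`. -/
def spaceDeriv (u : 𝓢(ℝ × ℝ, ℂ)) : 𝓢(ℝ × ℝ, ℂ) := ∂_{((1 : ℝ), (0 : ℝ))} u

lemma spaceDeriv_apply (u : 𝓢(ℝ × ℝ, ℂ)) (p : ℝ × ℝ) :
    spaceDeriv u p = deriv (fun x => u (x, p.2)) p.1 := by
  rw [spaceDeriv, SchwartzMap.lineDerivOp_apply_eq_fderiv]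
  have hline : HasDerivAt (fun x : ℝ => (x, p.2)) (1, 0) p.1 :=
    (hasDerivAt_id p.1).prodMk (hasDerivAt_const _ _)
  exact (u.differentiableAt.hasFDerivAt.comp_hasDerivAt p.1 hline).deriv.symm

/-- The pointwise product of Schwartz functions. -/
def schwartzMul (u v : 𝓢(ℝ × ℝ, ℂ)) : 𝓢(ℝ × ℝ, ℂ) :=
  SchwartzMap.pairing (ContinuousLinearMap.mul ℂ ℂ) u v

lemma schwartzMul_apply (u v : 𝓢(ℝ × ℝ, ℂ)) (p : ℝ × ℝ) : schwartzMul u v p = u p * v p := rfl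

lemma deriv_mul_eq_spaceDeriv_schwartzMul (u v : 𝓢(ℝ × ℝ, ℂ)) :
    (fun p : ℝ × ℝ => deriv (fun x => u (x, p.2) * v (x, p.2)) p.1) =
      spaceDeriv (schwartzMul u v) := by
  ext p
  simp only [spaceDeriv_apply, schwartzMul_apply]

/-- The plane with its Euclidean norm, on which Mathlib's Fourier transform is available. -/
abbrev EuclideanPlane : Type := WithLp 2 (ℝ × ℝ)

/-- Pullback of Schwartz functions from `ℝ × ℝ` to the Euclidean plane. -/
def toEuclideanPlane : 𝓢(ℝ × ℝ, ℂ) →L[ℂ] 𝓢(EuclideanPlane, ℂ) :=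
  compCLMOfContinuousLinearEquiv ℂ (WithLp.prodContinuousLinearEquiv 2 ℝ ℝ ℝ)

/-- The change of frequency variable between `FT2` and Mathlib's inverse Fourier transform, which
has the same sign but an additional `2π` in the exponent. -/
def freqEquiv : (ℝ × ℝ) ≃L[ℝ] EuclideanPlane :=
  (WithLp.prodContinuousLinearEquiv 2 ℝ ℝ ℝ).symm.trans
    (ContinuousLinearEquiv.smulLeft (Units.mk0 (2 * Real.pi)⁻¹ (by positivity)))

lemma freqEquiv_apply (p : ℝ × ℝ) : freqEquiv p = (2 * Real.pi)⁻¹ • WithLp.toLp 2 p := rfl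

lemma FT2_eq_fourierInv (f : ℝ × ℝ → ℂ) (p : ℝ × ℝ) :
    FT2 f p.1 p.2 = 𝓕⁻ (fun v : EuclideanPlane => f v.ofLp) (freqEquiv p) := by
  rw [Real.fourierInv_eq', FT2, ← (WithLp.volume_preserving_ofLp ℝ ℝ).integral_comp
    (WithLp.prodContinuousLinearEquiv 2 ℝ ℝ ℝ).toHomeomorph.measurableEmbedding]
  congr! 3
  simp only [WithLp.ofLp_fst, WithLp.ofLp_snd, ofReal_add, ofReal_mul, freqEquiv_apply,
    mul_inv_rev, WithLp.prod_inner_apply, WithLp.ofLp_smul, Prod.smul_fst, smul_eq_mul,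
    RCLike.inner_apply, Real.ringHom_apply, Prod.smul_snd, ofReal_ofNat, ofReal_inv]
  field_simp

/-- The transform `FT2` as a map of Schwartz functions. -/
def schwartzFT2 (u : 𝓢(ℝ × ℝ, ℂ)) : 𝓢(ℝ × ℝ, ℂ) :=
  compCLMOfContinuousLinearEquiv ℂ freqEquiv (𝓕⁻ (toEuclideanPlane u))

lemma schwartzFT2_apply (u : 𝓢(ℝ × ℝ, ℂ)) (p : ℝ × ℝ) : schwartzFT2 u p = FT2 u p.1 p.2 := by
  rw [FT2_eq_fourierInv]
  exact congrFun (SchwartzMap.fourierInv_coe _) _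

lemma schwartzFT2_surjective : Function.Surjective schwartzFT2 := by
  intro g
  refine ⟨compCLMOfContinuousLinearEquiv ℂ (WithLp.prodContinuousLinearEquiv 2 ℝ ℝ ℝ).symm
    (𝓕 (compCLMOfContinuousLinearEquiv ℂ freqEquiv.symm g)), ?_⟩
  have hU : toEuclideanPlane (compCLMOfContinuousLinearEquiv ℂ
      (WithLp.prodContinuousLinearEquiv 2 ℝ ℝ ℝ).symm
      (𝓕 (compCLMOfContinuousLinearEquiv ℂ freqEquiv.symm g))) =
      𝓕 (compCLMOfContinuousLinearEquiv ℂ freqEquiv.symm g) := by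
    ext v
    simp [toEuclideanPlane]
  ext p
  simp [schwartzFT2, hU]

lemma schwartzFT2_spaceDeriv (u : 𝓢(ℝ × ℝ, ℂ)) (p : ℝ × ℝ) :
    schwartzFT2 (spaceDeriv u) p = -(I * p.1) * schwartzFT2 u p := by
  have h : toEuclideanPlane (spaceDeriv u) =
      ∂_{(WithLp.toLp 2 ((1 : ℝ), (0 : ℝ)))} (toEuclideanPlane u) := by
    simp [spaceDeriv, toEuclideanPlane,
      SchwartzMap.lineDerivOp_compCLMOfContinuousLinearEquiv]
  have hg : (fun w : EuclideanPlane => inner ℝ w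
      (WithLp.toLp 2 ((1 : ℝ), (0 : ℝ)))).HasTemperateGrowth := by
    fun_prop
  simp only [schwartzFT2, h, SchwartzMap.fourierInv_lineDerivOp_eq]
  simp only [neg_smul, map_neg, map_smul, neg_apply, smul_apply,
    SchwartzMap.compCLMOfContinuousLinearEquiv_apply, Function.comp_apply,
    SchwartzMap.smulLeftCLM_apply_apply hg, real_smul, smul_eq_mul, neg_mul, neg_inj]
  simp only [freqEquiv_apply, mul_inv_rev, WithLp.prod_inner_apply, WithLp.ofLp_smul,
    Prod.smul_fst, smul_eq_mul, RCLike.inner_apply, Real.ringHom_apply, one_mul, Prod.smul_snd,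
    zero_mul, add_zero, ofReal_mul, ofReal_inv, ofReal_ofNat]
  field_simp

lemma integral_comp_freqEquiv (F : EuclideanPlane → ℂ) :
    ∫ q, F (freqEquiv q) = (2 * Real.pi) ^ 2 • ∫ w, F w := by
  simp only [freqEquiv_apply]
  rw [(WithLp.volume_preserving_toLp ℝ ℝ).integral_comp
    (WithLp.prodContinuousLinearEquiv 2 ℝ ℝ ℝ).symm.toHomeomorph.measurableEmbedding
    (fun w => F ((2 * Real.pi)⁻¹ • w)), Measure.integral_comp_inv_smul]
  have hfinrank : Module.finrank ℝ EuclideanPlane = 2 := by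
    simp [(WithLp.linearEquiv 2 ℝ (ℝ × ℝ)).finrank_eq]
  rw [hfinrank, abs_of_nonneg (by positivity)]

lemma schwartzFT2_mul (u v : 𝓢(ℝ × ℝ, ℂ)) (p : ℝ × ℝ) :
    schwartzFT2 (schwartzMul u v) p =
      (((2 * Real.pi) ^ 2)⁻¹ : ℝ) • ∫ q, schwartzFT2 u q * schwartzFT2 v (p - q) := by
  set U := 𝓕⁻ (toEuclideanPlane u) with hU
  set V := 𝓕⁻ (toEuclideanPlane v) with hV
  have hconv : 𝓕⁻ (toEuclideanPlane (schwartzMul u v)) =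
      SchwartzMap.convolution (ContinuousLinearMap.mul ℂ ℂ) U V := by
    have hpair : toEuclideanPlane (schwartzMul u v) =
        SchwartzMap.pairing (ContinuousLinearMap.mul ℂ ℂ) (𝓕 U) (𝓕 V) := by
      ext w
      simp [hU, hV, toEuclideanPlane, schwartzMul_apply, SchwartzMap.pairing_apply_apply]
    rw [hpair]
    rfl
  calc schwartzFT2 (schwartzMul u v) p
    _ = ∫ w, U w * V (freqEquiv p - w) := by
      rw [schwartzFT2, hconv]
      exact SchwartzMap.convolution_apply _ _ _ _
    _ = (((2 * Real.pi) ^ 2)⁻¹ : ℝ) • ∫ q, schwartzFT2 u q * schwartzFT2 v (p - q) := by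
      simp only [schwartzFT2, SchwartzMap.compCLMOfContinuousLinearEquiv_apply, Function.comp_apply,
        map_sub]
      rw [integral_comp_freqEquiv (fun w => U w * V (freqEquiv p - w)),
        inv_smul_smul₀ (by positivity)]

/-! ### Norms of functions localized near the dispersion curve -/

lemma one_add_abs_rpow_le (r x y : ℝ) :
    (1 + |x|) ^ r ≤ (1 + |x - y|) ^ |r| * (1 + |y|) ^ r := by
  have hle (x y : ℝ) : 1 + |x| ≤ (1 + |x - y|) * (1 + |y|) := by
    have htri : |x| ≤ |x - y| + |y| := by simpa using abs_add_le (x - y) y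
    nlinarith [abs_nonneg (x - y), abs_nonneg y]
  have hpos (x : ℝ) : 0 < 1 + |x| := by positivity
  rcases le_total 0 r with hr | hr
  · rw [abs_of_nonneg hr, ← Real.mul_rpow (hpos _).le (hpos _).le]
    exact Real.rpow_le_rpow (hpos x).le (hle x y) hr
  · rw [abs_of_nonpos hr, Real.rpow_neg (hpos _).le, ← Real.inv_rpow (hpos _).le,
      ← Real.mul_rpow (inv_pos.2 (hpos _)).le (hpos _).le]
    refine Real.rpow_le_rpow_of_nonpos (by have := hpos; positivity) ?_ hr
    rw [inv_mul_le_iff₀ (hpos _), abs_sub_comm]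
    exact hle y x

section LpNorm

variable {α E F : Type*} [MeasurableSpace α] {μ : Measure α} [NormedAddCommGroup E]
  [NormedAddCommGroup F] {f : α → E} {g : α → F} {p : ENNReal} {c : ℝ}

lemma lpNorm_le_mul_lpNorm (hg : MemLp g p μ) (hc : 0 ≤ c) (h : ∀ x, ‖f x‖ ≤ c * ‖g x‖) :
    lpNorm f p μ ≤ c * lpNorm g p μ := by
  calc lpNorm f p μ
    _ ≤ lpNorm (c • fun x => ‖g x‖) p μ := lpNorm_mono_real (hg.norm.const_smul c) h
    _ = c * lpNorm g p μ := by
      rw [lpNorm_const_smul, lpNorm_norm hg.aestronglyMeasurable, coe_nnnorm,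
        Real.norm_of_nonneg hc]

end LpNorm

section Cutoffs

variable {χ₀ χ : ℝ → ℝ}

lemma chiJ_nonneg (hχ : DyadicCutoffs χ₀ χ) (j : ℕ) (z : ℝ) : 0 ≤ chiJ χ₀ χ j z := by
  unfold chiJ
  split_ifs
  exacts [(hχ.mem0 _).1, (hχ.mem1 _).1]

lemma chiJ_of_abs_le_one (hχ : DyadicCutoffs χ₀ χ) (j : ℕ) {z : ℝ} (hz : |z| ≤ 1) :
    chiJ χ₀ χ j z = if j = 0 then 1 else 0 := by
  unfold chiJ
  split_ifs with hj
  · exact hχ.one0 z hz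
  · by_contra hne
    have hlow := (hχ.supp1 _ hne).1
    have hpow : (2 : ℝ) ^ (-(j : ℝ)) ≤ 1 / 2 := by
      calc (2 : ℝ) ^ (-(j : ℝ))
        _ ≤ 2 ^ (-1 : ℝ) := by
          gcongr
          · norm_num
          · exact_mod_cast Nat.one_le_iff_ne_zero.2 hj
        _ = 1 / 2 := by norm_num [Real.rpow_neg_one]
    rw [abs_mul, abs_of_pos (by positivity)] at hlow
    nlinarith [abs_nonneg z, Real.rpow_pos_of_pos two_pos (-(j : ℝ))]

lemma Xnorm_nonneg (hχ : DyadicCutoffs χ₀ χ) (a b s : ℝ) (f : ℝ × ℝ → ℂ) :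
    0 ≤ Xnorm a χ₀ χ b s f := by
  refine tsum_nonneg fun j => mul_nonneg (by positivity) (Real.rpow_nonneg ?_ _)
  refine integral_nonneg fun p => ?_
  have := chiJ_nonneg hχ j (p.2 - disp a p.1)
  positivity

lemma Xnorm_eq_of_modulation_le_one (hχ : DyadicCutoffs χ₀ χ) {a : ℝ} {f : ℝ × ℝ → ℂ}
    (hf : ∀ ξ lam, FT2 f ξ lam ≠ 0 → |lam - disp a ξ| ≤ 1) (b s : ℝ) :
    Xnorm a χ₀ χ b s f =
      (∫ p : ℝ × ℝ, (1 + |p.1|) ^ (2 * s) * ‖FT2 f p.1 p.2‖ ^ 2) ^ ((1 : ℝ) / 2) := by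
  have hcut (j : ℕ) (p : ℝ × ℝ) :
      chiJ χ₀ χ j (p.2 - disp a p.1) * (1 + |p.1|) ^ (2 * s) * ‖FT2 f p.1 p.2‖ ^ 2 =
        if j = 0 then (1 + |p.1|) ^ (2 * s) * ‖FT2 f p.1 p.2‖ ^ 2 else 0 := by
    by_cases h0 : FT2 f p.1 p.2 = 0
    · simp [h0]
    · rw [chiJ_of_abs_le_one hχ j (hf _ _ h0)]
      split_ifs <;> ring
  rw [Xnorm, tsum_eq_single 0]
  · simp [hcut]
  · intro j hj
    simp [hcut, hj]

end Cutoffs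

/-- The space-time frequencies of `u` lie in the part of the `1`-neighbourhood of the dispersion
curve `λ = ω(ξ)` over `|ξ - c| ≤ 1`. -/
def IsFreqLocalized (a c : ℝ) (u : 𝓢(ℝ × ℝ, ℂ)) : Prop :=
  ∀ p, schwartzFT2 u p ≠ 0 → |p.1 - c| ≤ 1 ∧ |p.2 - disp a p.1| ≤ 1

namespace IsFreqLocalized

variable {χ₀ χ : ℝ → ℝ} {a c : ℝ} {u : 𝓢(ℝ × ℝ, ℂ)}

lemma Xnorm_eq_lpNorm (hu : IsFreqLocalized a c u) (hχ : DyadicCutoffs χ₀ χ) (b s : ℝ) :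
    Xnorm a χ₀ χ b s u = lpNorm (fun p => (1 + |p.1|) ^ s • schwartzFT2 u p) 2 volume := by
  rw [Xnorm_eq_of_modulation_le_one hχ, lpNorm_eq_integral_norm_rpow_toReal two_ne_zero
    ENNReal.ofNat_ne_top]
  · simp only [ENNReal.toReal_ofNat, one_div, norm_smul, schwartzFT2_apply]
    congr! 3 with p
    rw [Real.norm_of_nonneg (by positivity), Real.rpow_ofNat, mul_pow, mul_comm 2 s,
      Real.rpow_mul (by positivity), Real.rpow_ofNat]
  · exact (Continuous.smul (Continuous.rpow_const (by fun_prop) fun p => Or.inl (by positivity))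
      (schwartzFT2 u).continuous).aestronglyMeasurable
  · intro ξ lam h
    exact (hu (ξ, lam) (by rwa [schwartzFT2_apply])).2

lemma weight_le (hu : IsFreqLocalized a c u) (s : ℝ) {p : ℝ × ℝ} (hp : schwartzFT2 u p ≠ 0) :
    (1 + |p.1|) ^ s ≤ 2 ^ |s| * (1 + |c|) ^ s := by
  refine (one_add_abs_rpow_le s p.1 c).trans ?_
  gcongr
  linarith [(hu p hp).1]

lemma le_weight (hu : IsFreqLocalized a c u) (s : ℝ) {p : ℝ × ℝ} (hp : schwartzFT2 u p ≠ 0) :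
    (1 + |c|) ^ s ≤ 2 ^ |s| * (1 + |p.1|) ^ s := by
  refine (one_add_abs_rpow_le s c p.1).trans ?_
  gcongr
  linarith [abs_sub_comm c p.1, (hu p hp).1]

lemma norm_weighted_le (hu : IsFreqLocalized a c u) (s : ℝ) (p : ℝ × ℝ) :
    ‖(1 + |p.1|) ^ s • schwartzFT2 u p‖ ≤ 2 ^ |s| * (1 + |c|) ^ s * ‖schwartzFT2 u p‖ := by
  rw [norm_smul, Real.norm_of_nonneg (by positivity)]
  by_cases hp : schwartzFT2 u p = 0
  · simp [hp]
  · gcongr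
    exact hu.weight_le s hp

lemma memLp_weighted (hu : IsFreqLocalized a c u) (s : ℝ) :
    MemLp (fun p => (1 + |p.1|) ^ s • schwartzFT2 u p) 2 volume := by
  refine ((schwartzFT2 u).memLp 2 volume).of_le_mul ?_ (.of_forall (hu.norm_weighted_le s))
  exact (Continuous.smul (Continuous.rpow_const (by fun_prop) fun p => Or.inl (by positivity))
    (schwartzFT2 u).continuous).aestronglyMeasurable

lemma Xnorm_le (hu : IsFreqLocalized a c u) (hχ : DyadicCutoffs χ₀ χ) (b s : ℝ) :
    Xnorm a χ₀ χ b s u ≤ 2 ^ |s| * (1 + |c|) ^ s * lpNorm (schwartzFT2 u) 2 volume := by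
  rw [hu.Xnorm_eq_lpNorm hχ]
  exact lpNorm_le_mul_lpNorm ((schwartzFT2 u).memLp 2 volume) (by positivity)
    (hu.norm_weighted_le s)

lemma le_Xnorm (hu : IsFreqLocalized a c u) (hχ : DyadicCutoffs χ₀ χ) (b s : ℝ) :
    (2 ^ |s|)⁻¹ * (1 + |c|) ^ s * lpNorm (schwartzFT2 u) 2 volume ≤ Xnorm a χ₀ χ b s u := by
  have hle : lpNorm (schwartzFT2 u) 2 volume ≤
      2 ^ |s| * ((1 + |c|) ^ s)⁻¹ * Xnorm a χ₀ χ b s u := by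
    rw [hu.Xnorm_eq_lpNorm hχ]
    refine lpNorm_le_mul_lpNorm (hu.memLp_weighted s) (by positivity) fun p => ?_
    by_cases hp : schwartzFT2 u p = 0
    · simp [hp]
    · rw [norm_smul, Real.norm_of_nonneg (by positivity), ← mul_assoc]
      refine le_mul_of_one_le_left (norm_nonneg _) ?_
      rw [mul_right_comm, ← div_eq_mul_inv, one_le_div (by positivity)]
      exact hu.le_weight s hp
  calc (2 ^ |s|)⁻¹ * (1 + |c|) ^ s * lpNorm (schwartzFT2 u) 2 volume
    _ ≤ (2 ^ |s|)⁻¹ * (1 + |c|) ^ s * (2 ^ |s| * ((1 + |c|) ^ s)⁻¹ * Xnorm a χ₀ χ b s u) := by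
      gcongr
    _ = Xnorm a χ₀ χ b s u := by
      field_simp

protected lemma spaceDeriv (hu : IsFreqLocalized a c u) :
    IsFreqLocalized a c (spaceDeriv u) := by
  intro p hp
  rw [schwartzFT2_spaceDeriv] at hp
  exact hu p (right_ne_zero_of_mul hp)

lemma mul_lpNorm_le_lpNorm_spaceDeriv (hu : IsFreqLocalized a c u) (hc : 1 < |c|) :
    (|c| - 1) * lpNorm (schwartzFT2 u) 2 volume ≤
      lpNorm (schwartzFT2 (spaceDeriv u)) 2 volume := by
  rw [← le_inv_mul_iff₀ (sub_pos.2 hc)]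
  refine lpNorm_le_mul_lpNorm (SchwartzMap.memLp _ 2 volume)
    (inv_nonneg.2 (sub_pos.2 hc).le) fun p => ?_
  rw [le_inv_mul_iff₀ (sub_pos.2 hc), schwartzFT2_spaceDeriv, norm_mul, norm_neg, norm_mul, norm_I,
    one_mul, norm_real, Real.norm_eq_abs]
  by_cases hp : schwartzFT2 u p = 0
  · simp [hp]
  · gcongr
    linarith [abs_sub_abs_le_abs_sub c p.1, abs_sub_comm c p.1, (hu p hp).1]

lemma le_Xnorm_spaceDeriv (hu : IsFreqLocalized a c u) (hχ : DyadicCutoffs χ₀ χ) (hc : 1 < |c|)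
    (b s : ℝ) :
    (2 ^ |s|)⁻¹ * (1 + |c|) ^ s * ((|c| - 1) * lpNorm (schwartzFT2 u) 2 volume) ≤
      Xnorm a χ₀ χ b s (spaceDeriv u) := by
  refine le_trans ?_ (hu.spaceDeriv.le_Xnorm hχ b s)
  gcongr
  exact hu.mul_lpNorm_le_lpNorm_spaceDeriv hc

end IsFreqLocalized

/-! ### Regularity of the dispersion relation -/

section Dispersion

variable {a : ℝ}

lemma hasDerivAt_disp (ha : -1 ≤ a) (x : ℝ) :
    HasDerivAt (disp a) ((2 + a) * |x| ^ (1 + a)) x := by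
  obtain rfl | hx := eq_or_ne x 0
  · have hval : (2 + a) * |(0 : ℝ)| ^ (1 + a) = |0| ^ (1 + a) := by
      obtain rfl | hne := eq_or_ne a (-1)
      · norm_num
      · simp [Real.zero_rpow (show 1 + a ≠ 0 by contrapose! hne; linarith)]
    rw [hval, hasDerivAt_iff_tendsto_slope]
    have hcont : Continuous fun y : ℝ => |y| ^ (1 + a) :=
      continuous_abs.rpow_const fun y => Or.inr (by linarith)
    refine (hcont.tendsto 0 |>.mono_left nhdsWithin_le_nhds).congr' ?_
    filter_upwards [self_mem_nhdsWithin] with y hy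
    simp [slope_def_field, disp, mul_div_cancel_left₀ _ (show y ≠ 0 from hy)]
  · have habs : |x| ≠ 0 := abs_ne_zero.2 hx
    refine ((hasDerivAt_id x).mul ((hasDerivAt_abs hx).rpow_const (Or.inl habs))).congr_deriv ?_
    have hsign : x * (SignType.sign x : ℝ) = |x| := self_mul_sign x
    have hpow : |x| ^ (1 + a) = |x| ^ a * |x| := by rw [add_comm, Real.rpow_add_one habs]
    simp only [id_eq, one_mul, add_sub_cancel_left, hpow]
    linear_combination ((1 + a) * |x| ^ a) * hsign

lemma abs_disp_sub_le (ha : -1 ≤ a) {R x y : ℝ} (hx : |x| ≤ R) (hy : |y| ≤ R) :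
    |disp a x - disp a y| ≤ (2 + a) * R ^ (1 + a) * |x - y| := by
  refine (convex_Icc (-R) R).norm_image_sub_le_of_norm_hasDerivWithin_le
    (fun z _ => (hasDerivAt_disp ha z).hasDerivWithinAt) (fun z hz => ?_)
    (abs_le.1 hy) (abs_le.1 hx)
  rw [norm_mul, Real.norm_of_nonneg (by linarith), Real.norm_of_nonneg (by positivity)]
  gcongr
  exacts [by linarith, by linarith, abs_le.2 hz]

end Dispersion

/-! ### Wave packets -/

/-- The dilation by `δ⁻¹` in the first frequency variable; it maps rectangles of size `δ × 1` to
squares of size `1`. -/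
def zoom (δ : ℝ) : (ℝ × ℝ) →ₗ[ℝ] ℝ × ℝ := (δ⁻¹ • LinearMap.id).prodMap LinearMap.id

lemma zoom_apply (δ : ℝ) (p : ℝ × ℝ) : zoom δ p = (δ⁻¹ * p.1, p.2) := rfl

lemma integral_comp_zoom {E : Type*} [NormedAddCommGroup E] [NormedSpace ℝ E] {δ : ℝ}
    (hδ : 0 < δ) (F : ℝ × ℝ → E) : ∫ p, F (zoom δ p) = δ • ∫ p, F p := by
  have hmap : Measure.map (zoom δ) volume = ENNReal.ofReal δ • volume := by
    have hprod := Measure.map_prod_map (volume : Measure ℝ) (volume : Measure ℝ)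
      (measurable_const_mul δ⁻¹) measurable_id
    rw [Real.map_volume_mul_left (inv_ne_zero hδ.ne'), inv_inv, abs_of_pos hδ, Measure.map_id,
      Measure.prod_smul_left] at hprod
    exact hprod.symm
  have hemb : MeasurableEmbedding (zoom δ) :=
    (MeasurableEquiv.prodCongr (MeasurableEquiv.mulLeft₀ δ⁻¹ (inv_ne_zero hδ.ne'))
      (MeasurableEquiv.refl ℝ)).measurableEmbedding
  rw [← hemb.integral_map, hmap, integral_smul_measure, ENNReal.toReal_ofReal hδ.le]

lemma lpNorm_two_comp_zoom {E : Type*} [NormedAddCommGroup E] {ε : ℝ} (hε : 0 < ε)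
    {F : ℝ × ℝ → E} (hF : Continuous F) (z : ℝ × ℝ) :
    lpNorm (fun p => F (zoom (ε ^ 2) (p - z))) 2 volume = ε * lpNorm F 2 volume := by
  have hzoom : Continuous (zoom (ε ^ 2)) := LinearMap.continuous_of_finiteDimensional _
  rw [lpNorm_eq_integral_norm_rpow_toReal two_ne_zero ENNReal.ofNat_ne_top
      (by fun_prop : Continuous _).aestronglyMeasurable,
    lpNorm_eq_integral_norm_rpow_toReal two_ne_zero ENNReal.ofNat_ne_top hF.aestronglyMeasurable,
    integral_sub_right_eq_self (fun p => ‖F (zoom (ε ^ 2) p)‖ ^ (2 : ENNReal).toReal),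
    integral_comp_zoom (by positivity) (fun p => ‖F p‖ ^ (2 : ENNReal).toReal), smul_eq_mul,
    Real.mul_rpow (by positivity) (by positivity)]
  congr 1
  simp [← Real.sqrt_eq_rpow, ← one_div, hε.le]

lemma exists_schwartzFT2_eq_comp_zoom (φ : 𝓢(ℝ × ℝ, ℂ)) {δ : ℝ} (hδ : δ ≠ 0) (z : ℝ × ℝ) :
    ∃ u : 𝓢(ℝ × ℝ, ℂ), ∀ p, schwartzFT2 u p = φ (zoom δ (p - z)) := by
  let zoomEquiv : (ℝ × ℝ) ≃L[ℝ] ℝ × ℝ :=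
    (ContinuousLinearEquiv.smulLeft (Units.mk0 δ⁻¹ (inv_ne_zero hδ))).prodCongr (.refl ℝ ℝ)
  obtain ⟨u, hu⟩ := schwartzFT2_surjective (SchwartzMap.compSubConstCLM ℂ z
    (compCLMOfContinuousLinearEquiv ℂ zoomEquiv φ))
  exact ⟨u, fun p => by rw [hu]; rfl⟩

lemma schwartzFT2_mul_of_comp_zoom {u v : 𝓢(ℝ × ℝ, ℂ)} {φ ψ : ℝ × ℝ → ℂ} {δ : ℝ} (hδ : 0 < δ)
    {y z : ℝ × ℝ} (hu : ∀ p, schwartzFT2 u p = φ (zoom δ (p - y)))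
    (hv : ∀ p, schwartzFT2 v p = ψ (zoom δ (p - z))) (p : ℝ × ℝ) :
    schwartzFT2 (schwartzMul u v) p =
      (((2 * Real.pi) ^ 2)⁻¹ * δ) • (φ ⋆[ContinuousLinearMap.mul ℂ ℂ] ψ)
        (zoom δ (p - (y + z))) := by
  calc schwartzFT2 (schwartzMul u v) p
    _ = ((2 * Real.pi) ^ 2)⁻¹ • ∫ q, φ (zoom δ (q - y)) *
          ψ (zoom δ (p - (y + z)) - zoom δ (q - y)) := by
      have hsub (q : ℝ × ℝ) : p - (y + z) - (q - y) = p - q - z := by abel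
      simp only [schwartzFT2_mul, hu, hv, ← map_sub, hsub]
    _ = (((2 * Real.pi) ^ 2)⁻¹ * δ) • (φ ⋆[ContinuousLinearMap.mul ℂ ℂ] ψ)
          (zoom δ (p - (y + z))) := by
      rw [integral_sub_right_eq_self
          (fun q => φ (zoom δ q) * ψ (zoom δ (p - (y + z)) - zoom δ q)) y,
        integral_comp_zoom hδ (fun r => φ r * ψ (zoom δ (p - (y + z)) - r)), mul_smul]
      rfl

lemma isFreqLocalized_of_zoom {a c N δ : ℝ} {u : 𝓢(ℝ × ℝ, ℂ)} (ha : a ∈ Set.Icc (-1) 1)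
    (hN : 1 ≤ N) (hc : |c| ≤ N) (hδ : 0 < δ) (hδN : 12 * N ^ (1 + a) * δ ≤ 1)
    (hu : ∀ p, schwartzFT2 u p ≠ 0 → ‖zoom δ (p - (c, disp a c))‖ < 1 / 2) :
    IsFreqLocalized a c u := by
  intro p hp
  obtain ⟨hfst, hsnd⟩ := max_lt_iff.1 (hu p hp)
  simp only [zoom_apply, Prod.fst_sub, Prod.snd_sub, Real.norm_eq_abs, abs_mul, abs_inv,
    abs_of_pos hδ, inv_mul_lt_iff₀ hδ] at hfst hsnd
  have hNpow : 1 ≤ N ^ (1 + a) := Real.one_le_rpow hN (by linarith [ha.1])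
  have hδ1 : δ ≤ 1 := by nlinarith
  have hp1 : |p.1| ≤ 2 * N := by linarith [abs_sub_abs_le_abs_sub p.1 c]
  have htwo : (2 : ℝ) ^ (1 + a) ≤ 4 := by
    calc (2 : ℝ) ^ (1 + a)
      _ ≤ 2 ^ (2 : ℝ) := Real.rpow_le_rpow_of_exponent_le one_le_two (by linarith [ha.2])
      _ = 4 := by norm_num
  have hdisp : |disp a c - disp a p.1| ≤ 1 / 2 := by
    calc |disp a c - disp a p.1|
      _ ≤ (2 + a) * (2 * N) ^ (1 + a) * |c - p.1| :=
        abs_disp_sub_le ha.1 (by linarith) hp1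
      _ ≤ 3 * (4 * N ^ (1 + a)) * (δ * (1 / 2)) := by
        rw [Real.mul_rpow two_pos.le (by linarith), abs_sub_comm]
        gcongr
        linarith [ha.2]
      _ ≤ 1 / 2 := by linarith
  exact ⟨by linarith, by linarith [abs_sub_le p.2 (disp a c) (disp a p.1)]⟩

section Profile

/-- The bump function on the frequency plane from which the wave packets are made. -/
def bump : ContDiffBump (0 : ℝ × ℝ) := ⟨1 / 8, 1 / 4, by norm_num, by norm_num⟩

lemma hasCompactSupport_ofReal_bump : HasCompactSupport fun p => (bump p : ℂ) :=
  bump.hasCompactSupport.comp_left ofReal_zero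

/-- `bump` as a complex Schwartz function. -/
def profile : 𝓢(ℝ × ℝ, ℂ) :=
  hasCompactSupport_ofReal_bump.toSchwartzMap (ofRealCLM.contDiff.comp bump.contDiff)

lemma profile_apply (p : ℝ × ℝ) : profile p = bump p := rfl

lemma support_profile : Function.support profile = Metric.ball 0 (1 / 4) := by
  rw [show Metric.ball (0 : ℝ × ℝ) (1 / 4) = Function.support bump from bump.support_eq.symm]
  ext p
  simp [profile_apply]

/-- The self-convolution of `profile`. -/
def profileConv : ℝ × ℝ → ℂ := profile ⋆[ContinuousLinearMap.mul ℂ ℂ] profile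

lemma continuous_profileConv : Continuous profileConv :=
  hasCompactSupport_ofReal_bump.continuous_convolution_right _
    profile.continuous.locallyIntegrable profile.continuous

lemma hasCompactSupport_profileConv : HasCompactSupport profileConv :=
  hasCompactSupport_ofReal_bump.convolution _ hasCompactSupport_ofReal_bump

lemma support_profileConv_subset : Function.support profileConv ⊆ Metric.ball 0 (1 / 2) := by
  refine (support_convolution_subset _).trans ?_
  rw [support_profile, ball_add_ball (by norm_num) (by norm_num)]
  norm_num

lemma profileConv_zero_ne_zero : profileConv 0 ≠ 0 := by
  have hsq : profileConv 0 = ((∫ p, bump p ^ 2 : ℝ) : ℂ) := by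
    rw [← integral_complex_ofReal]
    refine integral_congr_ae (.of_forall fun p => ?_)
    simp [profile_apply, bump.neg, sq]
  have hcont : Continuous fun p => bump p ^ 2 := bump.continuous.pow 2
  have hpos : 0 < ∫ p, bump p ^ 2 := by
    refine hcont.integral_pos_of_hasCompactSupport_nonneg_nonzero
      (bump.hasCompactSupport.comp_left (g := (· ^ 2)) (by simp)) (fun p => sq_nonneg _) (x := 0) ?_
    exact pow_ne_zero 2 (bump.pos_of_mem_ball (Metric.mem_ball_self bump.rOut_pos)).ne'
  rw [hsq]
  exact_mod_cast hpos.ne'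

lemma lpNorm_profileConv_pos : 0 < lpNorm profileConv 2 volume := by
  refine lpNorm_nonneg.lt_of_ne' fun h => profileConv_zero_ne_zero ?_
  have hmem : MemLp profileConv 2 volume :=
    continuous_profileConv.memLp_of_hasCompactSupport hasCompactSupport_profileConv
  have hae := (lpNorm_eq_zero hmem two_ne_zero).1 h
  exact congrFun ((continuous_profileConv.ae_eq_iff_eq volume continuous_zero).1 hae) 0

end Profile

lemma exists_interacting_packets {a N ε : ℝ} (ha : a ∈ Set.Icc (-1) 1) (hN : 1 ≤ N) (hε : 0 < ε)
    (hεN : 12 * N ^ (1 + a) * ε ^ 2 ≤ 1) :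
    ∃ u₁ u₂ : 𝓢(ℝ × ℝ, ℂ), IsFreqLocalized a 0 u₁ ∧ IsFreqLocalized a N u₂ ∧
      IsFreqLocalized a N (schwartzMul u₁ u₂) ∧
      lpNorm (schwartzFT2 u₁) 2 volume = ε * lpNorm profile 2 volume ∧
      lpNorm (schwartzFT2 u₂) 2 volume = ε * lpNorm profile 2 volume ∧
      lpNorm (schwartzFT2 (schwartzMul u₁ u₂)) 2 volume =
        ((2 * Real.pi) ^ 2)⁻¹ * ε ^ 3 * lpNorm profileConv 2 volume := by
  have hε2 : 0 < ε ^ 2 := by positivity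
  have hN0 : |N| ≤ N := (abs_of_pos (by linarith)).le
  obtain ⟨u₁, hu₁⟩ := exists_schwartzFT2_eq_comp_zoom profile hε2.ne' (0, disp a 0)
  obtain ⟨u₂, hu₂⟩ := exists_schwartzFT2_eq_comp_zoom profile hε2.ne' (N, disp a N)
  have hcenter : ((0, disp a 0) : ℝ × ℝ) + (N, disp a N) = (N, disp a N) := by simp [disp]
  have hmul (p : ℝ × ℝ) : schwartzFT2 (schwartzMul u₁ u₂) p =
      (((2 * Real.pi) ^ 2)⁻¹ * ε ^ 2) • profileConv (zoom (ε ^ 2) (p - (N, disp a N))) := by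
    rw [schwartzFT2_mul_of_comp_zoom hε2 hu₁ hu₂, hcenter]
    rfl
  have hprofile {q : ℝ × ℝ} (hq : profile q ≠ 0) : ‖q‖ < 1 / 2 := by
    have hq4 : q ∈ Metric.ball 0 (1 / 4) := support_profile ▸ hq
    linarith [mem_ball_zero_iff.1 hq4]
  refine ⟨u₁, u₂, ?_, ?_, ?_, ?_, ?_, ?_⟩
  · exact isFreqLocalized_of_zoom ha hN (by rw [abs_zero]; linarith) hε2 hεN
      fun p hp => hprofile (hu₁ p ▸ hp)
  · exact isFreqLocalized_of_zoom ha hN hN0 hε2 hεN fun p hp => hprofile (hu₂ p ▸ hp)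
  · refine isFreqLocalized_of_zoom ha hN hN0 hε2 hεN fun p hp => ?_
    rw [hmul] at hp
    exact mem_ball_zero_iff.1 (support_profileConv_subset (right_ne_zero_of_smul hp))
  · rw [funext hu₁, lpNorm_two_comp_zoom hε profile.continuous]
  · rw [funext hu₂, lpNorm_two_comp_zoom hε profile.continuous]
  · rw [funext hmul]
    change lpNorm ((((2 * Real.pi) ^ 2)⁻¹ * ε ^ 2) •
      fun p => profileConv (zoom (ε ^ 2) (p - (N, disp a N)))) 2 volume = _
    rw [lpNorm_const_smul, lpNorm_two_comp_zoom hε continuous_profileConv, coe_nnnorm,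
      Real.norm_of_nonneg (by positivity)]
    ring

/-! ### Failure of the bilinear estimate -/

/-- The estimate `‖∂ₓ(u₁u₂)‖_{X^{b'}_s} ≤ C ‖u₁‖_{X^b_s} ‖u₂‖_{X^b_s}`, with the exponents `b`
and `b'` unrelated. -/
def BilinearEstimate (a : ℝ) (χ₀ χ : ℝ → ℝ) (b b' s C : ℝ) : Prop :=
  ∀ u₁ u₂ : 𝓢(ℝ × ℝ, ℂ),
    Xnorm a χ₀ χ b' s (fun p : ℝ × ℝ => deriv (fun x => u₁ (x, p.2) * u₂ (x, p.2)) p.1) ≤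
      C * Xnorm a χ₀ χ b s u₁ * Xnorm a χ₀ χ b s u₂

namespace BilinearEstimate

variable {a b b' s C : ℝ} {χ₀ χ : ℝ → ℝ}

lemma sub_one_mul_le (hC : BilinearEstimate a χ₀ χ b b' s C) (hχ : DyadicCutoffs χ₀ χ)
    (ha : a ∈ Set.Icc (-1) 1) {N ε : ℝ} (hN : 1 < N) (hε : 0 < ε)
    (hεN : 12 * N ^ (1 + a) * ε ^ 2 ≤ 1) :
    (N - 1) * ε * lpNorm profileConv 2 volume ≤
      (2 * Real.pi) ^ 2 * (2 ^ |s|) ^ 3 * |C| * lpNorm profile 2 volume ^ 2 := by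
  obtain ⟨u₁, u₂, hloc₁, hloc₂, hloc, hnorm₁, hnorm₂, hnorm⟩ :=
    exists_interacting_packets ha hN.le hε hεN
  have habs : |N| = N := abs_of_pos (by linarith)
  set A := lpNorm profile 2 volume
  set B := lpNorm profileConv 2 volume
  set w := (1 + N) ^ s
  have hw0 : 0 < w := by positivity
  have hX₁ : Xnorm a χ₀ χ b s u₁ ≤ 2 ^ |s| * (ε * A) := by
    simpa [hnorm₁] using hloc₁.Xnorm_le hχ b s
  have hX₂ : Xnorm a χ₀ χ b s u₂ ≤ 2 ^ |s| * w * (ε * A) := by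
    simpa [hnorm₂, habs] using hloc₂.Xnorm_le hχ b s
  have hlow := (hloc.le_Xnorm_spaceDeriv hχ (by rwa [habs]) b' s).trans
    (deriv_mul_eq_spaceDeriv_schwartzMul u₁ u₂ ▸ hC u₁ u₂)
  have hupp : C * Xnorm a χ₀ χ b s u₁ * Xnorm a χ₀ χ b s u₂ ≤
      |C| * (2 ^ |s| * (ε * A)) * (2 ^ |s| * w * (ε * A)) := by
    have h₁ := Xnorm_nonneg hχ a b s u₁
    have h₂ := Xnorm_nonneg hχ a b s u₂
    have hA : 0 ≤ A := lpNorm_nonneg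
    gcongr
    exact le_abs_self C
  rw [hnorm, habs] at hlow
  calc (N - 1) * ε * B
    _ = (2 * Real.pi) ^ 2 * 2 ^ |s| * (w * ε ^ 2)⁻¹ *
          ((2 ^ |s|)⁻¹ * w * ((N - 1) * (((2 * Real.pi) ^ 2)⁻¹ * ε ^ 3 * B))) := by
      field_simp
    _ ≤ (2 * Real.pi) ^ 2 * 2 ^ |s| * (w * ε ^ 2)⁻¹ *
          (|C| * (2 ^ |s| * (ε * A)) * (2 ^ |s| * w * (ε * A))) := by
      exact mul_le_mul_of_nonneg_left (hlow.trans hupp) (by positivity)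
    _ = (2 * Real.pi) ^ 2 * (2 ^ |s|) ^ 3 * |C| * A ^ 2 := by
      field_simp

lemma rpow_mul_le (hC : BilinearEstimate a χ₀ χ b b' s C) (hχ : DyadicCutoffs χ₀ χ)
    (ha : a ∈ Set.Ico (-1) 1) {N : ℝ} (hN : 2 ≤ N) :
    N ^ ((1 - a) / 2) * lpNorm profileConv 2 volume ≤
      8 * ((2 * Real.pi) ^ 2 * (2 ^ |s|) ^ 3 * |C| * lpNorm profile 2 volume ^ 2) := by
  have hN0 : 0 < N := by linarith
  set ε := N ^ (-(1 + a) / 2) / 4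
  have hε : 0 < ε := by positivity
  have hscale : 12 * N ^ (1 + a) * ε ^ 2 ≤ 1 := by
    rw [div_pow, ← Real.rpow_mul_natCast hN0.le, mul_div_assoc', mul_assoc, ← Real.rpow_add hN0]
    norm_num
  have hpow : N ^ ((1 - a) / 2) = 4 * (N * ε) := by
    rw [show (1 - a) / 2 = 1 + -(1 + a) / 2 by ring,
      Real.rpow_one_add' hN0.le (by linarith [ha.2])]
    ring
  calc N ^ ((1 - a) / 2) * lpNorm profileConv 2 volume
    _ ≤ 8 * ((N - 1) * ε * lpNorm profileConv 2 volume) := by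
      rw [hpow]
      nlinarith [mul_pos hε lpNorm_profileConv_pos]
    _ ≤ 8 * ((2 * Real.pi) ^ 2 * (2 ^ |s|) ^ 3 * |C| * lpNorm profile 2 volume ^ 2) := by
      refine mul_le_mul_of_nonneg_left ?_ (by norm_num)
      exact hC.sub_one_mul_le hχ (Set.Ico_subset_Icc_self ha) (by linarith) hε hscale

end BilinearEstimate

theorem statement12_general (a : ℝ) (ha : a ∈ Set.Ico (-1 : ℝ) 1) (χ₀ χ : ℝ → ℝ)
    (hχ : DyadicCutoffs χ₀ χ) (b b' s : ℝ) :
    ¬ ∃ C : ℝ, BilinearEstimate a χ₀ χ b b' s C := by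
  rintro ⟨C, hC⟩
  have hexp : 0 < (1 - a) / 2 := by linarith [ha.2]
  have hlim := (tendsto_rpow_atTop hexp).atTop_mul_const lpNorm_profileConv_pos
  obtain ⟨N, hlt, hN⟩ :=
    ((hlim.eventually_gt_atTop _).and (Filter.eventually_ge_atTop 2)).exists
  exact hlt.not_ge (hC.rpow_mul_le hχ ha hN)

theorem statement12 (a : ℝ) (ha : a ∈ Set.Ico (0 : ℝ) 1)
    (χ₀ χ : ℝ → ℝ) (hχ : DyadicCutoffs χ₀ χ) (b : ℝ) :
    ¬ ∃ C > 0, ∀ u₁ u₂ : SchwartzMap (ℝ × ℝ) ℂ,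
      Xnorm a χ₀ χ (-b) (1 / 2 + a / 2)
          (fun p : ℝ × ℝ => deriv (fun x => u₁ (x, p.2) * u₂ (x, p.2)) p.1) ≤
        C * Xnorm a χ₀ χ b (1 / 2 + a / 2) (fun p => u₁ p) *
          Xnorm a χ₀ χ b (1 / 2 + a / 2) (fun p => u₂ p) := by
  rintro ⟨C, -, hC⟩
  exact statement12_general a ⟨by linarith [ha.1], ha.2⟩ χ₀ χ hχ b (-b) _ ⟨C, hC⟩
end
end

section
/- Let a = 0, so ω(ξ) = ξ|ξ| and s* = 1/2. There is NO constant C > 0 such that the estimate ‖∂ₓ(u₁u₂)‖_{X^{−1/2}_{1/2}} ≤ C ‖u₁‖_{X^{1/2}_{1/2}} ( ‖u₂‖_{X^{1/2}_{1/2}} + ‖u₂‖_{X^{1/2}_{1/2}}^{1/2} ‖u₂‖_{Y^{1/2}_{−1/2, 1/2}}^{1/2} ) + C ‖u₂‖_{X^{1/2}_{1/2}} ( ‖u₁‖_{X^{1/2}_{1/2}} + ‖u₁‖_{X^{1/2}_{1/2}}^{1/2} ‖u₁‖_{Y^{1/2}_{−1/2, 1/2}}^{1/2} ) holds for all Schwartz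 functions u₁, u₂ on ℝ². -/
/-!
The estimate fails by a logarithm of the frequency, through the interaction of a wave of high
frequency `N` with a wave of frequency `O(1)`.

Let the Fourier transform of `u₁` be a Gaussian concentrated near the point `(N, N²)` of the curve
`λ = ω(ξ)`: `|û₁|² = 4π² exp (-(η² + ρ²))` with `η = ξ - N` and `ρ = λ - N² - 2Nη`. Since `λ - ω(ξ)`
differs from `ρ` by at most `η²`, the modulation is `O(1)`. Multiplication by `x` costs a factor
`O(1 + N)`, which the weight `(1 + |ξ|)^{-1/2}` in place of `(1 + |ξ|)^{1/2}` in the first part of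
the `Y` norm absorbs, and multiplication by `t` costs `O(1)`. Hence the `X` and `Y` norms of `u₁`
are `O(√(1 + N))`. With `u₂` the same function for `N = 0`, the right-hand side is `O(√N)`.

The product is again a Gaussian, with `ρ` replaced by `λ - N² - Nη` and of width `N` in this
variable because the group velocities of the two waves are `2N` apart. At fixed `ξ ≈ N` it is thus
spread evenly over the modulations up to `N`: for each `1 ≤ 2^j ≤ N` the piece of `∂ₓ(u₁u₂)` at
modulation `2^j` has energy at least a multiple of `2^j N`, and contributes at least a multiple of
`2^{-j/2} (2^j N)^{1/2} = √N` to the left-hand side. With `N = 2^J`, the `ℓ¹` sum over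
`j = 1, …, J` is at least a multiple of `J √N`.
-/

open MeasureTheory Complex

noncomputable section

/-! ### Polynomial weights and Gaussian moments -/

section Weights

lemma one_add_norm_le_mul_one_add_norm_sub {E : Type*} [SeminormedAddCommGroup E] (x y : E) :
    1 + ‖x‖ ≤ (1 + ‖y‖) * (1 + ‖x - y‖) := by
  nlinarith [norm_le_norm_add_norm_sub' x y, mul_nonneg (norm_nonneg y) (norm_nonneg (x - y))]

lemma one_add_abs_le_mul_one_add_abs_sub (x y : ℝ) : 1 + |x| ≤ (1 + |y|) * (1 + |x - y|) :=
  one_add_norm_le_mul_one_add_norm_sub x y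

lemma exists_one_add_abs_pow_mul_exp_le {b : ℝ} (hb : 0 < b) (n : ℕ) :
    ∃ K, ∀ x : ℝ, (1 + |x|) ^ n * Real.exp (-b * x ^ 2) ≤ K := by
  refine ⟨n.factorial * Real.exp (1 + 1 / (4 * b)), fun x => ?_⟩
  have hpow : (1 + |x|) ^ n ≤ n.factorial * Real.exp (1 + |x|) := by
    have := Real.pow_div_factorial_le_exp (x := 1 + |x|) (by positivity) n
    rwa [div_le_iff₀' (by positivity)] at this
  have hsq : |x| - b * x ^ 2 ≤ 1 / (4 * b) := by
    rw [le_div_iff₀ (by positivity), ← sq_abs]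
    nlinarith [sq_nonneg (2 * b * |x| - 1)]
  calc (1 + |x|) ^ n * Real.exp (-b * x ^ 2)
      ≤ n.factorial * Real.exp (1 + |x|) * Real.exp (-b * x ^ 2) := by gcongr
    _ = n.factorial * Real.exp (1 + |x| + -b * x ^ 2) := by rw [mul_assoc, ← Real.exp_add]
    _ ≤ n.factorial * Real.exp (1 + 1 / (4 * b)) :=
      mul_le_mul_of_nonneg_left (Real.exp_le_exp.2 (by linarith)) (by positivity)

lemma integrable_one_add_abs_pow_mul_exp {b : ℝ} (hb : 0 < b) (n : ℕ) :
    Integrable fun x : ℝ => (1 + |x|) ^ n * Real.exp (-b * x ^ 2) := by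
  obtain ⟨K, hK⟩ := exists_one_add_abs_pow_mul_exp_le (half_pos hb) n
  refine ((integrable_exp_neg_mul_sq (half_pos hb)).const_mul K).mono'
    (by fun_prop) (.of_forall fun x => ?_)
  have hsplit : Real.exp (-b * x ^ 2) =
      Real.exp (-(b / 2) * x ^ 2) * Real.exp (-(b / 2) * x ^ 2) := by
    rw [← Real.exp_add]; ring_nf
  rw [Real.norm_of_nonneg (by positivity), hsplit, ← mul_assoc]
  exact mul_le_mul_of_nonneg_right (hK x) (Real.exp_pos _).le

end Weights

/-! ### Shears -/

section Shear

/-- The fibrewise translation `(x, y) ↦ (x, y - g x)` of a product. -/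
def shear {X G : Type*} [MeasurableSpace X] [MeasurableSpace G] [AddGroup G] [MeasurableAdd₂ G]
    [MeasurableSub₂ G] (g : X → G) (hg : Measurable g) : X × G ≃ᵐ X × G where
  toFun p := (p.1, p.2 - g p.1)
  invFun p := (p.1, p.2 + g p.1)
  left_inv p := by simp
  right_inv p := by simp
  measurable_toFun := measurable_fst.prodMk (measurable_snd.sub (hg.comp measurable_fst))
  measurable_invFun := measurable_fst.prodMk (measurable_snd.add (hg.comp measurable_fst))

lemma measurePreserving_shear {X G : Type*} [MeasurableSpace X] [MeasurableSpace G] [AddGroup G]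
    [MeasurableAdd₂ G] [MeasurableSub₂ G] (μ : Measure X) (ν : Measure G) [SFinite μ] [SFinite ν]
    [ν.IsAddRightInvariant] {g : X → G} (hg : Measurable g) :
    MeasurePreserving (shear g hg) (μ.prod ν) (μ.prod ν) :=
  (MeasurePreserving.id μ).skew_product (g := fun x y => y - g x)
    (measurable_snd.sub (hg.comp measurable_fst))
    (.of_forall fun x => (measurePreserving_sub_right ν (g x)).map_eq)

/-- Frequency coordinates adapted to the line of slope `v` through `(k, l)`: the displacement in
`ξ` from `k`, and the displacement in `λ` from that line. -/
def shearedCoord (v k l : ℝ) (p : ℝ × ℝ) : ℝ × ℝ := (p.1 - k, p.2 - l - v * (p.1 - k))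

lemma measurePreserving_shearedCoord (v k l : ℝ) : MeasurePreserving (shearedCoord v k l) :=
  (measurePreserving_shear volume volume (measurable_const_mul v)).comp
    (measurePreserving_sub_right (volume : Measure (ℝ × ℝ)) (k, l))

lemma measurableEmbedding_shearedCoord (v k l : ℝ) : MeasurableEmbedding (shearedCoord v k l) :=
  (shear _ (measurable_const_mul v)).measurableEmbedding.comp
    (measurableEmbedding_subRight (k, l))

/-- The Galilean boost `(x, t) ↦ (x + vt, t)` of space-time. -/
def boost (v : ℝ) (p : ℝ × ℝ) : ℝ × ℝ := (p.1 + v * p.2, p.2)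

lemma boost_eq_swap_comp_shear_comp_swap (v : ℝ) :
    boost v = Prod.swap ∘ shear _ (measurable_const_mul (-v)) ∘ Prod.swap := by
  funext p
  simp [boost, shear]

lemma measurePreserving_boost (v : ℝ) : MeasurePreserving (boost v) := by
  rw [boost_eq_swap_comp_shear_comp_swap]
  exact Measure.measurePreserving_swap.comp
    ((measurePreserving_shear volume volume (measurable_const_mul (-v))).comp
      Measure.measurePreserving_swap)

lemma measurableEmbedding_boost (v : ℝ) : MeasurableEmbedding (boost v) := by
  rw [boost_eq_swap_comp_shear_comp_swap]
  exact MeasurableEquiv.prodComm.measurableEmbedding.comp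
    ((shear _ (measurable_const_mul (-v))).measurableEmbedding.comp
      MeasurableEquiv.prodComm.measurableEmbedding)

end Shear

/-! ### Wave packets and their space-time Fourier transforms -/

section WavePacket

lemma FT2_const_mul (c : ℂ) (f : ℝ × ℝ → ℂ) (ξ lam : ℝ) :
    FT2 (fun p => c * f p) ξ lam = c * FT2 f ξ lam := by
  simp only [FT2, mul_left_comm _ c, integral_const_mul]

lemma integrable_phase_mul {f : ℝ × ℝ → ℂ} (hf : Integrable f) (ξ lam : ℝ) :
    Integrable fun p : ℝ × ℝ => Complex.exp (Complex.I * ((p.1 * ξ + p.2 * lam : ℝ) : ℂ)) * f p :=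
  hf.bdd_mul (c := 1) (by fun_prop) (.of_forall fun p => (Complex.norm_exp_I_mul_ofReal _).le)

lemma FT2_sub {f g : ℝ × ℝ → ℂ} (hf : Integrable f) (hg : Integrable g) (ξ lam : ℝ) :
    FT2 (fun p => f p - g p) ξ lam = FT2 f ξ lam - FT2 g ξ lam := by
  simp only [FT2, mul_sub]
  exact integral_sub (integrable_phase_mul hf ξ lam) (integrable_phase_mul hg ξ lam)

/-- The wave packet with profiles `F` in space and `G` in time, travelling with velocity `-v` and
modulated by the plane wave `exp (-i (k x + l t))`. With the sign convention of `FT2`, its Fourier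
transform lives near `(k, l)`, along the line of slope `v`. -/
def wavePacket (F G : ℝ → ℂ) (v k l : ℝ) (p : ℝ × ℝ) : ℂ :=
  Complex.exp (-(Complex.I * ((k * p.1 + l * p.2 : ℝ) : ℂ))) *
    (F (boost v p).1 * G (boost v p).2)

variable {F G : ℝ → ℂ} (v k l : ℝ)

lemma integrable_wavePacket (hF : Integrable F) (hG : Integrable G) :
    Integrable (wavePacket F G v k l) := by
  have hFG : Integrable fun p => F (boost v p).1 * G (boost v p).2 :=
    (measurePreserving_boost v).integrable_comp_of_integrable (hF.mul_prod hG)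
  refine hFG.bdd_mul (c := 1) (by fun_prop) (.of_forall fun p => ?_)
  rw [← mul_neg, ← Complex.ofReal_neg, Complex.norm_exp_I_mul_ofReal]

lemma FT2_wavePacket (p : ℝ × ℝ) :
    FT2 (wavePacket F G v k l) p.1 p.2 =
      FT1 F (shearedCoord v k l p).1 * FT1 G (shearedCoord v k l p).2 := by
  set η := (shearedCoord v k l p).1
  set ρ := (shearedCoord v k l p).2
  have hphase (q : ℝ × ℝ) :
      Complex.exp (Complex.I * ((q.1 * p.1 + q.2 * p.2 : ℝ) : ℂ)) * wavePacket F G v k l q =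
        Complex.exp (Complex.I * (((boost v q).1 * η : ℝ) : ℂ)) * F (boost v q).1 *
          (Complex.exp (Complex.I * (((boost v q).2 * ρ : ℝ) : ℂ)) * G (boost v q).2) := by
    rw [wavePacket, mul_mul_mul_comm, ← mul_assoc, ← Complex.exp_add, ← Complex.exp_add]
    congr 2
    simp only [η, ρ, boost, shearedCoord]
    push_cast
    ring
  rw [FT2, integral_congr_ae (.of_forall hphase),
    (measurePreserving_boost v).integral_comp (measurableEmbedding_boost v)
      (fun q : ℝ × ℝ => Complex.exp (Complex.I * ((q.1 * η : ℝ) : ℂ)) * F q.1 *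
        (Complex.exp (Complex.I * ((q.2 * ρ : ℝ) : ℂ)) * G q.2))]
  exact integral_prod_mul (fun x : ℝ => Complex.exp (Complex.I * ((x * η : ℝ) : ℂ)) * F x)
    fun t : ℝ => Complex.exp (Complex.I * ((t * ρ : ℝ) : ℂ)) * G t

lemma FT2_snd_mul_wavePacket (p : ℝ × ℝ) :
    FT2 (fun q => (q.2 : ℂ) * wavePacket F G v k l q) p.1 p.2 =
      FT1 F (shearedCoord v k l p).1 *
        FT1 (fun t => (t : ℂ) * G t) (shearedCoord v k l p).2 := by
  rw [← FT2_wavePacket]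
  congr 1
  funext q
  simp only [wavePacket, boost]
  ring

lemma FT2_fst_mul_wavePacket (hF : Integrable F) (hF' : Integrable fun x : ℝ => (x : ℂ) * F x)
    (hG : Integrable G) (hG' : Integrable fun t : ℝ => (t : ℂ) * G t) (p : ℝ × ℝ) :
    FT2 (fun q => (q.1 : ℂ) * wavePacket F G v k l q) p.1 p.2 =
      FT1 (fun x => (x : ℂ) * F x) (shearedCoord v k l p).1 * FT1 G (shearedCoord v k l p).2 -
        v * (FT1 F (shearedCoord v k l p).1 *
          FT1 (fun t => (t : ℂ) * G t) (shearedCoord v k l p).2) := by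
  have hsplit : (fun q : ℝ × ℝ => (q.1 : ℂ) * wavePacket F G v k l q) = fun q =>
      wavePacket (fun x => (x : ℂ) * F x) G v k l q -
        v * wavePacket F (fun t => (t : ℂ) * G t) v k l q := by
    funext q
    simp only [wavePacket, boost]
    push_cast
    ring
  rw [hsplit, FT2_sub (integrable_wavePacket v k l hF' hG)
    ((integrable_wavePacket v k l hF hG').const_mul _), FT2_const_mul,
    FT2_wavePacket, FT2_wavePacket]

end WavePacket

/-! ### Gaussian wave packets -/

section Gaussian

/-- The complex-valued Gaussian `exp (-b x²)`. -/
def gaussian (b x : ℝ) : ℂ := Complex.exp (-b * x ^ 2)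

variable {b c : ℝ}

lemma integrable_gaussian (hb : 0 < b) : Integrable (gaussian b) :=
  integrable_cexp_neg_mul_sq (b := (b : ℂ)) (by simpa using hb)

lemma integrable_id_mul_gaussian (hb : 0 < b) : Integrable fun x : ℝ => (x : ℂ) * gaussian b x :=
  integrable_mul_cexp_neg_mul_sq (b := (b : ℂ)) (by simpa using hb)

lemma norm_gaussian (b x : ℝ) : ‖gaussian b x‖ = Real.exp (-b * x ^ 2) := by
  rw [gaussian, ← Complex.ofReal_neg, ← Complex.ofReal_pow, ← Complex.ofReal_mul,
    Complex.norm_exp_ofReal]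

lemma FT1_gaussian (hb : 0 < b) (ξ : ℝ) :
    FT1 (gaussian b) ξ = (Real.pi / b : ℂ) ^ (1 / 2 : ℂ) * Complex.exp (-ξ ^ 2 / (4 * b)) := by
  rw [← fourierIntegral_gaussian (b := b) (by simpa using hb), FT1]
  simp only [gaussian, Complex.ofReal_mul, mul_comm (_ : ℂ) (ξ : ℂ), ← mul_assoc]

lemma norm_FT1_gaussian_sq (hb : 0 < b) (ξ : ℝ) :
    ‖FT1 (gaussian b) ξ‖ ^ 2 = Real.pi / b * Real.exp (-ξ ^ 2 / (2 * b)) := by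
  have hpi : 0 < Real.pi / b := div_pos Real.pi_pos hb
  rw [FT1_gaussian hb, norm_mul, mul_pow]
  congr 1
  · rw [← Complex.ofReal_div, Complex.norm_cpow_eq_rpow_re_of_pos hpi, ← Real.rpow_natCast,
      ← Real.rpow_mul hpi.le]
    norm_num
  · rw [show (-ξ ^ 2 / (4 * b) : ℂ) = ((-ξ ^ 2 / (4 * b) : ℝ) : ℂ) by push_cast; ring,
      Complex.norm_exp_ofReal, ← Real.exp_nat_mul]
    congr 1
    push_cast
    field_simp
    ring

lemma FT1_id_mul_gaussian (hb : 0 < b) (ξ : ℝ) :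
    FT1 (fun x => (x : ℂ) * gaussian b x) ξ =
      Complex.I * (ξ / (2 * b) : ℝ) * FT1 (gaussian b) ξ := by
  have hphase (x : ℝ) : HasDerivAt (fun x : ℝ => Complex.exp (Complex.I * ((x * ξ : ℝ) : ℂ)))
      (Complex.I * ξ * Complex.exp (Complex.I * ((x * ξ : ℝ) : ℂ))) x := by
    have := (((hasDerivAt_id x).mul_const ξ).ofReal_comp.const_mul Complex.I).cexp
    simpa [mul_comm] using this
  have hgauss (x : ℝ) : HasDerivAt (gaussian b) (-(2 * b) * ((x : ℂ) * gaussian b x)) x := by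
    have := (((hasDerivAt_id x).ofReal_comp.pow 2).const_mul (-b : ℂ)).cexp
    convert! this using 1
    simp only [gaussian, id, Pi.pow_apply]
    push_cast
    ring
  have hbdd {f : ℝ → ℂ} (hf : Integrable f) :
      Integrable fun x : ℝ => Complex.exp (Complex.I * ((x * ξ : ℝ) : ℂ)) * f x :=
    hf.bdd_mul (c := 1) (by fun_prop) (.of_forall fun x => (Complex.norm_exp_I_mul_ofReal _).le)
  have hparts := integral_mul_deriv_eq_deriv_mul_of_integrable
    (fun x _ => hphase x) (fun x _ => hgauss x)
    (hbdd ((integrable_id_mul_gaussian hb).const_mul _))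
    (((hbdd (integrable_gaussian hb)).const_mul (Complex.I * ξ)).congr
      (.of_forall fun x => (mul_assoc _ _ _).symm))
    (hbdd (integrable_gaussian hb))
  simp only [mul_left_comm _ (-(2 * (b : ℂ))), mul_assoc (Complex.I * (ξ : ℂ)),
    integral_const_mul] at hparts
  change -(2 * b) * FT1 (fun x => (x : ℂ) * gaussian b x) ξ =
    -(Complex.I * ξ * FT1 (gaussian b) ξ) at hparts
  have hb' : (b : ℂ) ≠ 0 := by exact_mod_cast hb.ne'
  rw [← mul_right_inj' (neg_ne_zero.2 (mul_ne_zero two_ne_zero hb')), hparts]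
  push_cast
  field_simp

/-- The wave packet with Gaussian profiles `exp (-b x²)` and `exp (-c t²)`. -/
def gaussianPacket (b c v k l : ℝ) : ℝ × ℝ → ℂ := wavePacket (gaussian b) (gaussian c) v k l

lemma norm_FT2_gaussianPacket_sq (hb : 0 < b) (hc : 0 < c) (v k l : ℝ) (p : ℝ × ℝ) :
    ‖FT2 (gaussianPacket b c v k l) p.1 p.2‖ ^ 2 =
      Real.pi ^ 2 / (b * c) * (Real.exp (-(shearedCoord v k l p).1 ^ 2 / (2 * b)) *
        Real.exp (-(shearedCoord v k l p).2 ^ 2 / (2 * c))) := by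
  rw [gaussianPacket, FT2_wavePacket, norm_mul, mul_pow, norm_FT1_gaussian_sq hb,
    norm_FT1_gaussian_sq hc]
  ring

lemma FT2_snd_mul_gaussianPacket (hc : 0 < c) (b v k l : ℝ) (p : ℝ × ℝ) :
    FT2 (fun q => (q.2 : ℂ) * gaussianPacket b c v k l q) p.1 p.2 =
      Complex.I * ((shearedCoord v k l p).2 / (2 * c) : ℝ) *
        FT2 (gaussianPacket b c v k l) p.1 p.2 := by
  simp only [gaussianPacket]
  rw [FT2_snd_mul_wavePacket, FT2_wavePacket, FT1_id_mul_gaussian hc]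
  ring

lemma FT2_fst_mul_gaussianPacket (hb : 0 < b) (hc : 0 < c) (v k l : ℝ) (p : ℝ × ℝ) :
    FT2 (fun q => (q.1 : ℂ) * gaussianPacket b c v k l q) p.1 p.2 =
      Complex.I * ((shearedCoord v k l p).1 / (2 * b) -
          v * ((shearedCoord v k l p).2 / (2 * c)) : ℝ) *
        FT2 (gaussianPacket b c v k l) p.1 p.2 := by
  simp only [gaussianPacket]
  rw [FT2_fst_mul_wavePacket v k l (integrable_gaussian hb) (integrable_id_mul_gaussian hb)
    (integrable_gaussian hc) (integrable_id_mul_gaussian hc), FT2_wavePacket,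
    FT1_id_mul_gaussian hb, FT1_id_mul_gaussian hc]
  push_cast
  ring

/- Completing the square: the velocity difference `v - v'` makes the product shorter in time, hence
wider in the time frequency. -/
lemma gaussianPacket_mul {b' : ℝ} (hb : b + b' ≠ 0) (c c' v v' k k' l l' : ℝ) (p : ℝ × ℝ) :
    gaussianPacket b c v k l p * gaussianPacket b' c' v' k' l' p =
      gaussianPacket (b + b') (c + c' + b * b' * (v - v') ^ 2 / (b + b'))
        ((b * v + b' * v') / (b + b')) (k + k') (l + l') p := by
  have hb' : (b + b' : ℂ) ≠ 0 := by exact_mod_cast hb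
  simp only [gaussianPacket, wavePacket, gaussian, boost, ← Complex.exp_add]
  congr 1
  push_cast
  field_simp
  ring

end Gaussian

/-! ### Wave packets as Schwartz functions -/

section Schwartz

lemma norm_iteratedFDeriv_cexp_le (n : ℕ) (z : ℂ) :
    ‖iteratedFDeriv ℝ n Complex.exp z‖ ≤ ‖Complex.exp z‖ := by
  induction n generalizing z with
  | zero => simp
  | succ n ih =>
    have hfderiv : fderiv ℝ Complex.exp = ContinuousLinearMap.mul ℝ ℂ ∘ Complex.exp := by
      funext w
      refine HasFDerivAt.fderiv ?_
      convert! (Complex.hasDerivAt_exp w).hasFDerivAt.restrictScalars ℝ using 1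
      ext; simp [mul_comm]
    rw [← norm_iteratedFDeriv_fderiv, hfderiv]
    calc ‖iteratedFDeriv ℝ n (ContinuousLinearMap.mul ℝ ℂ ∘ Complex.exp) z‖
        ≤ ‖ContinuousLinearMap.mul ℝ ℂ‖ * ‖iteratedFDeriv ℝ n Complex.exp z‖ :=
          ContinuousLinearMap.norm_iteratedFDeriv_comp_left _
            (Complex.contDiff_exp (n := ⊤)).contDiffAt le_top
      _ ≤ 1 * ‖Complex.exp z‖ :=
          mul_le_mul (ContinuousLinearMap.opNorm_mul_le ℝ ℂ) (ih z) (norm_nonneg _) zero_le_one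
      _ = ‖Complex.exp z‖ := one_mul _

variable {E : Type*} [NormedAddCommGroup E] [NormedSpace ℝ E]

lemma exists_norm_iteratedFDeriv_cexp_comp_le {g : E → ℂ} (hg : g.HasTemperateGrowth) (n : ℕ) :
    ∃ (m : ℕ) (C : ℝ), 0 ≤ C ∧ ∀ x, ‖iteratedFDeriv ℝ n (fun y => Complex.exp (g y)) x‖ ≤
      C * ((1 + ‖x‖) ^ m * ‖Complex.exp (g x)‖) := by
  obtain ⟨j, C, hC, hj⟩ := hg.norm_iteratedFDeriv_le_uniform n
  refine ⟨j * n, n.factorial * (C + 1) ^ n, by positivity, fun x => ?_⟩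
  have hone : 1 ≤ (C + 1) * (1 + ‖x‖) ^ j :=
    one_le_mul_of_one_le_of_one_le (by linarith) (one_le_pow₀ (by linarith [norm_nonneg x]))
  have hg' (i : ℕ) (hi : 1 ≤ i) (hin : i ≤ n) :
      ‖iteratedFDeriv ℝ i g x‖ ≤ ((C + 1) * (1 + ‖x‖) ^ j) ^ i :=
    calc ‖iteratedFDeriv ℝ i g x‖ ≤ C * (1 + ‖x‖) ^ j := hj i hin x
      _ ≤ (C + 1) * (1 + ‖x‖) ^ j := by gcongr; linarith
      _ ≤ ((C + 1) * (1 + ‖x‖) ^ j) ^ i := le_self_pow₀ hone (by omega)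
  calc ‖iteratedFDeriv ℝ n (fun y => Complex.exp (g y)) x‖
      ≤ n.factorial * ‖Complex.exp (g x)‖ * ((C + 1) * (1 + ‖x‖) ^ j) ^ n :=
        norm_iteratedFDeriv_comp_le (N := (⊤ : ℕ∞)) Complex.contDiff_exp hg.1
          (mod_cast le_top) x (fun i _ => norm_iteratedFDeriv_cexp_le i _) hg'
    _ = n.factorial * (C + 1) ^ n * ((1 + ‖x‖) ^ (j * n) * ‖Complex.exp (g x)‖) := by
        rw [mul_pow, ← pow_mul]; ring

/-- The Schwartz function `exp ∘ g`, for an exponent `g` of temperate growth such that `exp ∘ g`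
decays rapidly. -/
def cexpSchwartz (g : E → ℂ) (hg : g.HasTemperateGrowth)
    (hdecay : ∀ n : ℕ, ∃ C, ∀ x, (1 + ‖x‖) ^ n * ‖Complex.exp (g x)‖ ≤ C) : SchwartzMap E ℂ where
  toFun x := Complex.exp (g x)
  smooth' := Complex.contDiff_exp.comp hg.1
  decay' k n := by
    obtain ⟨m, C, hC, hm⟩ := exists_norm_iteratedFDeriv_cexp_comp_le hg n
    obtain ⟨K, hK⟩ := hdecay (k + m)
    refine ⟨C * K, fun x => ?_⟩
    calc ‖x‖ ^ k * ‖iteratedFDeriv ℝ n (fun y => Complex.exp (g y)) x‖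
        ≤ (1 + ‖x‖) ^ k * (C * ((1 + ‖x‖) ^ m * ‖Complex.exp (g x)‖)) := by
          gcongr
          · linarith
          · exact hm x
      _ = C * ((1 + ‖x‖) ^ (k + m) * ‖Complex.exp (g x)‖) := by rw [pow_add]; ring
      _ ≤ C * K := by gcongr; exact hK x

/-- The exponent of the Gaussian wave packet `gaussianPacket b c v k l`. -/
def gaussianPacketExponent (b c v k l : ℝ) (p : ℝ × ℝ) : ℂ :=
  -(Complex.I * ((k * p.1 + l * p.2 : ℝ) : ℂ)) +
    (-b * ((p.1 + v * p.2 : ℝ) : ℂ) ^ 2 + -c * (p.2 : ℂ) ^ 2)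

lemma gaussianPacket_eq_cexp (b c v k l : ℝ) (p : ℝ × ℝ) :
    gaussianPacket b c v k l p = Complex.exp (gaussianPacketExponent b c v k l p) := by
  simp only [gaussianPacket, wavePacket, gaussian, boost, gaussianPacketExponent, Complex.exp_add]

lemma hasTemperateGrowth_gaussianPacketExponent (b c v k l : ℝ) :
    (gaussianPacketExponent b c v k l).HasTemperateGrowth := by
  have hfst : (fun p : ℝ × ℝ => p.1).HasTemperateGrowth :=
    (ContinuousLinearMap.fst ℝ ℝ ℝ).hasTemperateGrowth
  have hsnd : (fun p : ℝ × ℝ => p.2).HasTemperateGrowth :=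
    (ContinuousLinearMap.snd ℝ ℝ ℝ).hasTemperateGrowth
  have hconst {F : Type} [NormedAddCommGroup F] [NormedSpace ℝ F] (r : F) :
      (fun _ : ℝ × ℝ => r).HasTemperateGrowth := .const r
  have hofReal {f : ℝ × ℝ → ℝ} (hf : f.HasTemperateGrowth) :
      (fun p => (f p : ℂ)).HasTemperateGrowth :=
    Function.Complex.hasTemperateGrowth_ofReal.comp hf
  exact ((hconst Complex.I).mul
      (hofReal (((hconst k).mul hfst).add ((hconst l).mul hsnd)))).neg.add
    (((hconst (-b : ℂ)).mul ((hofReal (hfst.add ((hconst v).mul hsnd))).pow 2)).add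
      ((hconst (-c : ℂ)).mul ((hofReal hsnd).pow 2)))

lemma one_add_norm_le_mul_boost (v : ℝ) (p : ℝ × ℝ) :
    1 + ‖p‖ ≤ (1 + |v|) * ((1 + |(boost v p).1|) * (1 + |(boost v p).2|)) := by
  have hfst : |p.1| ≤ |(boost v p).1| + |v| * |p.2| := by
    rw [← abs_mul]
    simpa [boost] using abs_sub (p.1 + v * p.2) (v * p.2)
  have hnorm : ‖p‖ ≤ |(boost v p).1| + |v| * |p.2| + |p.2| := by
    rw [Prod.norm_def, Real.norm_eq_abs, Real.norm_eq_abs]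
    exact max_le (hfst.trans (le_add_of_nonneg_right (abs_nonneg _)))
      (le_add_of_nonneg_left (by positivity))
  change 1 + ‖p‖ ≤ (1 + |v|) * ((1 + |(boost v p).1|) * (1 + |p.2|))
  nlinarith [mul_nonneg (abs_nonneg v) (abs_nonneg p.2), abs_nonneg (boost v p).1, abs_nonneg v,
    mul_nonneg (abs_nonneg (boost v p).1) (abs_nonneg p.2),
    mul_nonneg (abs_nonneg v) (mul_nonneg (abs_nonneg (boost v p).1) (abs_nonneg p.2)),
    mul_nonneg (abs_nonneg v) (abs_nonneg (boost v p).1)]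

lemma norm_gaussianPacket (b c v k l : ℝ) (p : ℝ × ℝ) :
    ‖gaussianPacket b c v k l p‖ =
      Real.exp (-b * (boost v p).1 ^ 2) * Real.exp (-c * (boost v p).2 ^ 2) := by
  rw [gaussianPacket, wavePacket, norm_mul, norm_mul, ← mul_neg, ← Complex.ofReal_neg,
    Complex.norm_exp_I_mul_ofReal, norm_gaussian, norm_gaussian, one_mul]

lemma exists_one_add_norm_pow_mul_norm_gaussianPacket_le {b c : ℝ} (hb : 0 < b) (hc : 0 < c)
    (v k l : ℝ) (n : ℕ) :
    ∃ C, ∀ p, (1 + ‖p‖) ^ n * ‖gaussianPacket b c v k l p‖ ≤ C := by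
  obtain ⟨K, hK⟩ := exists_one_add_abs_pow_mul_exp_le hb n
  obtain ⟨L, hL⟩ := exists_one_add_abs_pow_mul_exp_le hc n
  refine ⟨(1 + |v|) ^ n * (K * L), fun p => ?_⟩
  rw [norm_gaussianPacket]
  set q := boost v p
  have hK0 : 0 ≤ K := le_trans (by positivity) (hK 0)
  calc (1 + ‖p‖) ^ n * (Real.exp (-b * q.1 ^ 2) * Real.exp (-c * q.2 ^ 2))
      ≤ ((1 + |v|) * ((1 + |q.1|) * (1 + |q.2|))) ^ n *
          (Real.exp (-b * q.1 ^ 2) * Real.exp (-c * q.2 ^ 2)) := by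
        gcongr
        exact one_add_norm_le_mul_boost v p
    _ = (1 + |v|) ^ n * (((1 + |q.1|) ^ n * Real.exp (-b * q.1 ^ 2)) *
          ((1 + |q.2|) ^ n * Real.exp (-c * q.2 ^ 2))) := by
        rw [mul_pow, mul_pow]; ring
    _ ≤ (1 + |v|) ^ n * (K * L) := by
        gcongr
        · exact hK _
        · exact hL _

/-- The Gaussian wave packet `gaussianPacket b c v k l` as a Schwartz function. -/
def gaussianPacketSchwartz {b c : ℝ} (hb : 0 < b) (hc : 0 < c) (v k l : ℝ) :
    SchwartzMap (ℝ × ℝ) ℂ :=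
  cexpSchwartz _ (hasTemperateGrowth_gaussianPacketExponent b c v k l) <| by
    simpa only [gaussianPacket_eq_cexp] using
      exists_one_add_norm_pow_mul_norm_gaussianPacket_le hb hc v k l

lemma coe_gaussianPacketSchwartz {b c : ℝ} (hb : 0 < b) (hc : 0 < c) (v k l : ℝ) :
    ⇑(gaussianPacketSchwartz hb hc v k l) = gaussianPacket b c v k l :=
  funext fun p => (gaussianPacket_eq_cexp b c v k l p).symm

lemma hasFDerivAt_phase (ξ lam : ℝ) (p : ℝ × ℝ) :
    HasFDerivAt (fun q : ℝ × ℝ => Complex.exp (Complex.I * ((q.1 * ξ + q.2 * lam : ℝ) : ℂ)))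
      (Complex.exp (Complex.I * ((p.1 * ξ + p.2 * lam : ℝ) : ℂ)) • Complex.I •
        (Complex.ofRealCLM ∘L
          (ξ • ContinuousLinearMap.fst ℝ ℝ ℝ + lam • ContinuousLinearMap.snd ℝ ℝ ℝ))) p := by
  have := ((Complex.ofRealCLM ∘L (ξ • ContinuousLinearMap.fst ℝ ℝ ℝ +
    lam • ContinuousLinearMap.snd ℝ ℝ ℝ)).hasFDerivAt (x := p)).const_mul Complex.I
  convert! this.cexp using 1
  · funext q; simp [mul_comm]
  · simp [mul_comm]

lemma deriv_comp_prodMk_left {F : Type*} [NormedAddCommGroup F] [NormedSpace ℝ F] {f : ℝ × E → F}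
    {p : ℝ × E} (hf : DifferentiableAt ℝ f p) :
    deriv (fun x => f (x, p.2)) p.1 = fderiv ℝ f p (1, 0) :=
  (hf.hasFDerivAt.comp_hasDerivAt p.1
    ((hasDerivAt_id p.1).prodMk (hasDerivAt_const p.1 p.2))).deriv

lemma FT2_deriv_fst (f : SchwartzMap (ℝ × ℝ) ℂ) (ξ lam : ℝ) :
    FT2 (fun p => deriv (fun x => f (x, p.2)) p.1) ξ lam = -(Complex.I * ξ) * FT2 f ξ lam := by
  set e : ℝ × ℝ → ℂ := fun p => Complex.exp (Complex.I * ((p.1 * ξ + p.2 * lam : ℝ) : ℂ))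
  have he (p : ℝ × ℝ) : fderiv ℝ e p (1, 0) = Complex.I * ξ * e p := by
    rw [(hasFDerivAt_phase ξ lam p).fderiv]
    simp [e, mul_comm]
  have hf' : Integrable fun p => fderiv ℝ f p (1, 0) :=
    (LineDeriv.lineDerivOp ((1, 0) : ℝ × ℝ) f).integrable.congr
      (.of_forall fun p => SchwartzMap.lineDerivOp_apply_eq_fderiv _ _ _)
  have hparts : ∫ p, e p * fderiv ℝ f p (1, 0) = -∫ p, fderiv ℝ e p (1, 0) * f p := by
    refine integral_mul_fderiv_eq_neg_fderiv_mul_of_integrable ?_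
      (integrable_phase_mul hf' ξ lam) (integrable_phase_mul f.integrable ξ lam)
      (fun p _ => (hasFDerivAt_phase ξ lam p).differentiableAt) (fun p _ => f.differentiableAt)
    simpa only [he, mul_assoc] using
      (integrable_phase_mul f.integrable ξ lam).const_mul (Complex.I * ξ)
  simp only [FT2, deriv_comp_prodMk_left f.differentiableAt]
  rw [hparts]
  simp only [he, mul_assoc, integral_const_mul, neg_mul]
  rfl

end Schwartz

/-! ### Dyadic decomposition of the modulation -/

/-- The density `(1 + |ξ|)^{2s} |f̂(ξ, λ)|²` of the `L²_t H^s_x` energy of `f`. -/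
def energyDensity (s : ℝ) (f : ℝ × ℝ → ℂ) (p : ℝ × ℝ) : ℝ :=
  (1 + |p.1|) ^ (2 * s) * ‖FT2 f p.1 p.2‖ ^ 2

/-- The part of the energy of `f` at modulation `|λ - ω(ξ)| ∼ 2^j`. -/
def modulationEnergy (a : ℝ) (χ₀ χ : ℝ → ℝ) (s : ℝ) (f : ℝ × ℝ → ℂ) (j : ℕ) : ℝ :=
  ∫ p : ℝ × ℝ, chiJ χ₀ χ j (p.2 - disp a p.1) * energyDensity s f p

lemma energyDensity_nonneg (s : ℝ) (f : ℝ × ℝ → ℂ) (p : ℝ × ℝ) : 0 ≤ energyDensity s f p := by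
  unfold energyDensity
  positivity

lemma Xnorm_eq_tsum_modulationEnergy (a : ℝ) (χ₀ χ : ℝ → ℝ) (b s : ℝ) (f : ℝ × ℝ → ℂ) :
    Xnorm a χ₀ χ b s f =
      ∑' j : ℕ, (2 : ℝ) ^ ((j : ℝ) * b) * modulationEnergy a χ₀ χ s f j ^ ((1 : ℝ) / 2) := by
  simp only [Xnorm, modulationEnergy, energyDensity, mul_assoc]

lemma measurable_disp (a : ℝ) : Measurable (disp a) := by
  unfold disp
  fun_prop

lemma chiJ_of_ne_zero (χ₀ χ : ℝ → ℝ) {j : ℕ} (hj : j ≠ 0) :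
    chiJ χ₀ χ j = fun z => χ ((2 ^ j)⁻¹ * z) := by
  funext z
  rw [chiJ, if_neg hj, Real.rpow_neg zero_le_two, Real.rpow_natCast]

lemma integral_indicator_mul_chiJ (χ₀ χ : ℝ → ℝ) (a δ : ℝ) {S : Set ℝ} (hS : MeasurableSet S)
    {j : ℕ} (hj : j ≠ 0) :
    ∫ p : ℝ × ℝ, S.indicator (fun _ => δ) p.1 * chiJ χ₀ χ j (p.2 - disp a p.1) =
      2 ^ j * (δ * volume.real S * ∫ z, χ z) := by
  have hshear := (measurePreserving_shear volume volume (measurable_disp a)).integral_comp'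
    fun q : ℝ × ℝ => S.indicator (fun _ => δ) q.1 * chiJ χ₀ χ j q.2
  refine hshear.trans ?_
  rw [integral_prod_mul (S.indicator fun _ => δ),
    integral_indicator_const _ hS, chiJ_of_ne_zero χ₀ χ hj, Measure.integral_comp_mul_left,
    inv_inv, abs_of_pos (by positivity), smul_eq_mul, smul_eq_mul]
  ring

namespace DyadicCutoffs

variable {χ₀ χ : ℝ → ℝ} (h : DyadicCutoffs χ₀ χ)
include h

lemma chiJ_mem_Icc (j : ℕ) (z : ℝ) : chiJ χ₀ χ j z ∈ Set.Icc 0 1 := by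
  unfold chiJ
  split_ifs
  exacts [h.mem0 z, h.mem1 _]

lemma continuous_chiJ (j : ℕ) : Continuous (chiJ χ₀ χ j) := by
  unfold chiJ
  split_ifs
  exacts [h.smooth0.continuous, h.smooth1.continuous.comp (continuous_const_mul _)]

lemma abs_bounds_of_chiJ_ne_zero {j : ℕ} {z : ℝ} (hz : chiJ χ₀ χ j z ≠ 0) :
    2 ^ j ≤ 2 * (1 + |z|) ∧ |z| ≤ 2 * 2 ^ j := by
  rcases eq_or_ne j 0 with rfl | hj
  · have : |z| ≤ 2 := not_lt.1 fun hlt => hz (by simpa [chiJ] using h.supp0 z hlt)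
    exact ⟨by rw [pow_zero]; linarith [abs_nonneg z], by simpa using this⟩
  · rw [chiJ_of_ne_zero χ₀ χ hj] at hz
    obtain ⟨hlow, hup⟩ := h.supp1 _ hz
    rw [abs_mul, abs_of_pos (by positivity)] at hlow hup
    rw [lt_inv_mul_iff₀ (by positivity)] at hlow
    rw [inv_mul_lt_iff₀ (by positivity)] at hup
    constructor <;> linarith

lemma two_pow_pow_mul_chiJ_le (n j : ℕ) (z : ℝ) :
    (2 ^ j) ^ n * chiJ χ₀ χ j z ≤ (2 * (1 + |z|)) ^ n := by
  by_cases hz : chiJ χ₀ χ j z = 0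
  · rw [hz, mul_zero]
    positivity
  · calc (2 ^ j) ^ n * chiJ χ₀ χ j z ≤ (2 ^ j) ^ n * 1 := by gcongr; exact (h.chiJ_mem_Icc j z).2
      _ ≤ (2 * (1 + |z|)) ^ n := by
        rw [mul_one]
        gcongr
        exact (h.abs_bounds_of_chiJ_ne_zero hz).1

lemma integral_pos : 0 < ∫ z, χ z := by
  have hsupp : Function.support χ ⊆ Set.Icc (-2) 2 := fun z hz =>
    abs_le.1 (h.supp1 z hz).2.le
  have h_int : Integrable χ := h.smooth1.continuous.integrable_of_hasCompactSupport
    (HasCompactSupport.of_support_subset_isCompact isCompact_Icc hsupp)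
  rw [integral_pos_iff_support_of_nonneg (fun z => (h.mem1 z).1) h_int]
  refine h.smooth1.continuous.isOpen_support.measure_pos volume ?_
  by_contra! hempty
  have hχ : ∀ z, χ z = 0 := by simpa [Function.support_eq_empty_iff, funext_iff] using hempty
  have hpart : ∑' j, chiJ χ₀ χ j 3 = 0 := by
    refine (tsum_congr fun j => ?_).trans tsum_zero
    unfold chiJ
    split_ifs
    exacts [h.supp0 3 (by norm_num), hχ _]
  exact zero_ne_one (hpart.symm.trans (h.partition 3))

lemma modulationEnergy_nonneg (a s : ℝ) (f : ℝ × ℝ → ℂ) (j : ℕ) :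
    0 ≤ modulationEnergy a χ₀ χ s f j :=
  integral_nonneg fun p => mul_nonneg (h.chiJ_mem_Icc j _).1 (energyDensity_nonneg s f p)

lemma Xnorm_term_nonneg (a b s : ℝ) (f : ℝ × ℝ → ℂ) (j : ℕ) :
    0 ≤ (2 : ℝ) ^ ((j : ℝ) * b) * modulationEnergy a χ₀ χ s f j ^ ((1 : ℝ) / 2) :=
  mul_nonneg (by positivity) (Real.rpow_nonneg (h.modulationEnergy_nonneg a s f j) _)

lemma Xnorm_nonneg (a b s : ℝ) (f : ℝ × ℝ → ℂ) : 0 ≤ Xnorm a χ₀ χ b s f := by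
  rw [Xnorm_eq_tsum_modulationEnergy]
  exact tsum_nonneg (h.Xnorm_term_nonneg a b s f)

lemma Ynorm_nonneg (a b s₀ s₁ : ℝ) (f : ℝ × ℝ → ℂ) : 0 ≤ Ynorm a χ₀ χ b s₀ s₁ f :=
  add_nonneg (h.Xnorm_nonneg ..) (h.Xnorm_nonneg ..)

section UpperBound

variable {a s : ℝ} {f : ℝ × ℝ → ℂ} {n : ℕ} {H : ℝ × ℝ → ℝ} (hH : Integrable H)
  (hle : ∀ p, (1 + |p.2 - disp a p.1|) ^ n * energyDensity s f p ≤ H p)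
include hH hle

lemma two_pow_pow_mul_modulationEnergy_le (j : ℕ) :
    (2 ^ j) ^ n * modulationEnergy a χ₀ χ s f j ≤ 2 ^ n * ∫ p, H p := by
  rw [modulationEnergy, ← integral_const_mul, ← integral_const_mul]
  refine integral_mono_of_nonneg (.of_forall fun p => ?_) (hH.const_mul _)
    (.of_forall fun p => ?_)
  · exact mul_nonneg (by positivity)
      (mul_nonneg (h.chiJ_mem_Icc j _).1 (energyDensity_nonneg s f p))
  · calc (2 ^ j) ^ n * (chiJ χ₀ χ j (p.2 - disp a p.1) * energyDensity s f p)
        = (2 ^ j) ^ n * chiJ χ₀ χ j (p.2 - disp a p.1) * energyDensity s f p :=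
          (mul_assoc _ _ _).symm
      _ ≤ (2 * (1 + |p.2 - disp a p.1|)) ^ n * energyDensity s f p :=
          mul_le_mul_of_nonneg_right (h.two_pow_pow_mul_chiJ_le n j _) (energyDensity_nonneg s f p)
      _ = 2 ^ n * ((1 + |p.2 - disp a p.1|) ^ n * energyDensity s f p) := by
          rw [mul_pow, mul_assoc]
      _ ≤ 2 ^ n * H p := by gcongr; exact hle p

lemma Xnorm_term_le (b : ℝ) (j : ℕ) :
    (2 : ℝ) ^ ((j : ℝ) * b) * modulationEnergy a χ₀ χ s f j ^ ((1 : ℝ) / 2) ≤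
      (2 ^ n * ∫ p, H p) ^ ((1 : ℝ) / 2) * ((2 : ℝ) ^ (b - n / 2)) ^ j := by
  have hE := h.modulationEnergy_nonneg a s f j
  have hsplit : (2 : ℝ) ^ ((j : ℝ) * b) =
      ((2 ^ j) ^ n) ^ ((1 : ℝ) / 2) * ((2 : ℝ) ^ (b - n / 2)) ^ j := by
    rw [← pow_mul, ← Real.rpow_natCast, ← Real.rpow_natCast, ← Real.rpow_mul zero_le_two,
      ← Real.rpow_mul zero_le_two, ← Real.rpow_add zero_lt_two]
    congr 1
    push_cast
    ring
  rw [hsplit, mul_right_comm, ← Real.mul_rpow (by positivity) hE]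
  exact mul_le_mul_of_nonneg_right (Real.rpow_le_rpow (by positivity)
    (h.two_pow_pow_mul_modulationEnergy_le hH hle j) (by norm_num)) (by positivity)

variable {b : ℝ} (hb : 2 * b < n)
include hb

lemma summable_Xnorm_term :
    Summable fun j : ℕ =>
      (2 : ℝ) ^ ((j : ℝ) * b) * modulationEnergy a χ₀ χ s f j ^ ((1 : ℝ) / 2) :=
  .of_nonneg_of_le (h.Xnorm_term_nonneg a b s f) (h.Xnorm_term_le hH hle b)
    ((summable_geometric_of_lt_one (by positivity)
      (Real.rpow_lt_one_of_one_lt_of_neg one_lt_two (by linarith))).mul_left _)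

lemma Xnorm_le :
    Xnorm a χ₀ χ b s f ≤
      (2 ^ n * ∫ p, H p) ^ ((1 : ℝ) / 2) * (1 - (2 : ℝ) ^ (b - n / 2))⁻¹ := by
  have hr : (2 : ℝ) ^ (b - n / 2) < 1 :=
    Real.rpow_lt_one_of_one_lt_of_neg one_lt_two (by linarith)
  rw [Xnorm_eq_tsum_modulationEnergy, ← tsum_geometric_of_lt_one (by positivity) hr,
    ← tsum_mul_left]
  exact (h.summable_Xnorm_term hH hle hb).tsum_le_tsum (h.Xnorm_term_le hH hle b)
    ((summable_geometric_of_lt_one (by positivity) hr).mul_left _)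

end UpperBound

section LowerBound

variable {a s δ : ℝ} {f : ℝ × ℝ → ℂ} {S : Set ℝ} {J : ℕ}

variable (hf : Integrable (energyDensity s f))
include hf

lemma two_pow_mul_le_modulationEnergy (hS : MeasurableSet S) (hδ : 0 ≤ δ)
    (hlow : ∀ p : ℝ × ℝ, p.1 ∈ S → |p.2 - disp a p.1| ≤ 2 * 2 ^ J → δ ≤ energyDensity s f p)
    {j : ℕ} (hj : j ≠ 0) (hjJ : j ≤ J) :
    2 ^ j * (δ * volume.real S * ∫ z, χ z) ≤ modulationEnergy a χ₀ χ s f j := by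
  rw [← integral_indicator_mul_chiJ χ₀ χ a δ hS hj]
  have h_int : Integrable fun p : ℝ × ℝ => chiJ χ₀ χ j (p.2 - disp a p.1) * energyDensity s f p :=
    hf.bdd_mul (c := 1)
      ((h.continuous_chiJ j).measurable.comp (measurable_snd.sub
        ((measurable_disp a).comp measurable_fst))).aestronglyMeasurable
      (.of_forall fun p => by
        rw [Real.norm_of_nonneg (h.chiJ_mem_Icc j _).1]; exact (h.chiJ_mem_Icc j _).2)
  refine integral_mono_of_nonneg (.of_forall fun p => ?_) h_int (.of_forall fun p => ?_)
  · exact mul_nonneg (Set.indicator_nonneg (fun _ _ => hδ) _) (h.chiJ_mem_Icc j _).1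
  · dsimp only
    rw [mul_comm]
    by_cases hz : chiJ χ₀ χ j (p.2 - disp a p.1) = 0
    · rw [hz, zero_mul, zero_mul]
    · refine mul_le_mul_of_nonneg_left ?_ (h.chiJ_mem_Icc j _).1
      refine Set.indicator_apply_le' (fun hp => hlow p hp ?_) fun _ => energyDensity_nonneg s f p
      refine (h.abs_bounds_of_chiJ_ne_zero hz).2.trans ?_
      gcongr
      exact one_le_two

lemma mul_rpow_half_le_Xnorm (hS : MeasurableSet S) (hδ : 0 ≤ δ)
    (hlow : ∀ p : ℝ × ℝ, p.1 ∈ S → |p.2 - disp a p.1| ≤ 2 * 2 ^ J → δ ≤ energyDensity s f p) :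
    J * (δ * volume.real S * ∫ z, χ z) ^ ((1 : ℝ) / 2) ≤ Xnorm a χ₀ χ (-(1 / 2)) s f := by
  set m := δ * volume.real S * ∫ z, χ z
  have hm : 0 ≤ m := mul_nonneg (mul_nonneg hδ measureReal_nonneg) h.integral_pos.le
  have hterm : ∀ j ∈ Finset.Icc 1 J, m ^ ((1 : ℝ) / 2) ≤
      (2 : ℝ) ^ ((j : ℝ) * -(1 / 2)) * modulationEnergy a χ₀ χ s f j ^ ((1 : ℝ) / 2) := by
    intro j hj
    obtain ⟨hj1, hjJ⟩ := Finset.mem_Icc.1 hj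
    calc m ^ ((1 : ℝ) / 2)
        = (2 : ℝ) ^ ((j : ℝ) * -(1 / 2)) * (2 ^ j * m) ^ ((1 : ℝ) / 2) := by
          rw [Real.mul_rpow (by positivity) hm, ← Real.rpow_natCast, ← Real.rpow_mul zero_le_two,
            ← mul_assoc, ← Real.rpow_add zero_lt_two]
          simp
      _ ≤ _ := by
          gcongr
          exact h.two_pow_mul_le_modulationEnergy hf hS hδ hlow (by omega) hjJ
  rw [Xnorm_eq_tsum_modulationEnergy]
  calc J * m ^ ((1 : ℝ) / 2) = ∑ _j ∈ Finset.Icc 1 J, m ^ ((1 : ℝ) / 2) := by simp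
    _ ≤ _ := Finset.sum_le_sum hterm
    _ ≤ _ := (h.summable_Xnorm_term (n := 0) hf (by simp) (by norm_num)).sum_le_tsum _
        fun j _ => h.Xnorm_term_nonneg a _ s f j

end LowerBound

end DyadicCutoffs

/-! ### Norms of the packets -/

section Packet

lemma disp_zero (ξ : ℝ) : disp 0 ξ = ξ * |ξ| := by simp [disp]

lemma abs_disp_zero_sub_tangent_le {N : ℝ} (hN : 0 ≤ N) (ξ : ℝ) :
    |disp 0 ξ - N ^ 2 - 2 * N * (ξ - N)| ≤ (ξ - N) ^ 2 := by
  rw [disp_zero, abs_le]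
  rcases le_total 0 ξ with hξ | hξ
  · rw [abs_of_nonneg hξ]
    constructor <;> nlinarith [sq_nonneg (ξ - N)]
  · rw [abs_of_nonpos hξ]
    constructor <;> nlinarith [sq_nonneg N, sq_nonneg ξ, mul_nonneg hN (neg_nonneg.2 hξ)]

lemma one_add_abs_modulation_le {N : ℝ} (hN : 0 ≤ N) (p : ℝ × ℝ) :
    1 + |p.2 - disp 0 p.1| ≤ (1 + |(shearedCoord (2 * N) N (N ^ 2) p).1|) ^ 2 *
      (1 + |(shearedCoord (2 * N) N (N ^ 2) p).2|) := by
  set η := (shearedCoord (2 * N) N (N ^ 2) p).1 with hη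
  set ρ := (shearedCoord (2 * N) N (N ^ 2) p).2 with hρ
  have hmod : |p.2 - disp 0 p.1| ≤ |ρ| + |η| ^ 2 :=
    calc |p.2 - disp 0 p.1| = |ρ - (disp 0 p.1 - N ^ 2 - 2 * N * η)| := by
          rw [hη, hρ]; simp only [shearedCoord]; ring_nf
      _ ≤ |ρ| + |disp 0 p.1 - N ^ 2 - 2 * N * η| := abs_sub _ _
      _ ≤ |ρ| + |η| ^ 2 := by rw [sq_abs]; gcongr; exact abs_disp_zero_sub_tangent_le hN p.1
  nlinarith [abs_nonneg η, abs_nonneg ρ, mul_nonneg (abs_nonneg η) (abs_nonneg ρ),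
    mul_nonneg (sq_nonneg |η|) (abs_nonneg ρ)]

/-- The Gaussian wave packet with `|f̂|² = 4π² exp (-(η² + ρ²))`, where `(η, ρ)` are the sheared
coordinates along the tangent at `(N, N²)` to the curve `λ = ω(ξ)`. -/
def packet (N : ℝ) : SchwartzMap (ℝ × ℝ) ℂ :=
  gaussianPacketSchwartz one_half_pos one_half_pos (2 * N) N (N ^ 2)

/-- Up to the factor `1 + N`, this function of the sheared coordinates dominates the energy
densities of `packet N` and of its products with `x` and `t`. -/
def packetEnvelope (q : ℝ × ℝ) : ℝ :=
  16 * Real.pi ^ 2 * ((1 + |q.1|) ^ 3 * Real.exp (-1 * q.1 ^ 2)) *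
    ((1 + |q.2|) ^ 2 * Real.exp (-1 * q.2 ^ 2))

lemma norm_FT2_packet_sq (N : ℝ) (p : ℝ × ℝ) :
    ‖FT2 (packet N) p.1 p.2‖ ^ 2 =
      4 * Real.pi ^ 2 * (Real.exp (-1 * (shearedCoord (2 * N) N (N ^ 2) p).1 ^ 2) *
        Real.exp (-1 * (shearedCoord (2 * N) N (N ^ 2) p).2 ^ 2)) := by
  rw [packet, coe_gaussianPacketSchwartz, norm_FT2_gaussianPacket_sq one_half_pos one_half_pos]
  ring_nf

lemma mul_norm_FT2_packet_sq_le {N w : ℝ} {p : ℝ × ℝ}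
    (hw : w ≤ 4 * (1 + N) * ((1 + |(shearedCoord (2 * N) N (N ^ 2) p).1|) ^ 3 *
      (1 + |(shearedCoord (2 * N) N (N ^ 2) p).2|) ^ 2)) :
    w * ‖FT2 (packet N) p.1 p.2‖ ^ 2 ≤
      (1 + N) * packetEnvelope (shearedCoord (2 * N) N (N ^ 2) p) := by
  refine (mul_le_mul_of_nonneg_right hw (sq_nonneg _)).trans_eq ?_
  rw [norm_FT2_packet_sq, packetEnvelope]
  ring

lemma one_add_abs_fst_le_shearedCoord {k : ℝ} (hk : 0 ≤ k) (v l : ℝ) (p : ℝ × ℝ) :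
    1 + |p.1| ≤ (1 + k) * (1 + |(shearedCoord v k l p).1|) := by
  simpa only [abs_of_nonneg hk, shearedCoord] using one_add_abs_le_mul_one_add_abs_sub p.1 k

lemma energyDensity_packet_le {N : ℝ} (hN : 0 ≤ N) (p : ℝ × ℝ) :
    energyDensity (1 / 2) (packet N) p ≤
      (1 + N) * packetEnvelope (shearedCoord (2 * N) N (N ^ 2) p) := by
  refine mul_norm_FT2_packet_sq_le ?_
  have hweight := one_add_abs_fst_le_shearedCoord hN (2 * N) (N ^ 2) p
  set η := (shearedCoord (2 * N) N (N ^ 2) p).1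
  set ρ := (shearedCoord (2 * N) N (N ^ 2) p).2
  have hη : 1 + |η| ≤ (1 + |η|) ^ 3 := le_self_pow₀ (by linarith [abs_nonneg η]) (by norm_num)
  have hρ : 1 ≤ (1 + |ρ|) ^ 2 := one_le_pow₀ (by linarith [abs_nonneg ρ])
  calc (1 + |p.1|) ^ (2 * (1 / 2) : ℝ) = 1 + |p.1| := by norm_num
    _ ≤ 1 * (1 + N) * ((1 + |η|) * 1) := by linarith
    _ ≤ 4 * (1 + N) * ((1 + |η|) ^ 3 * (1 + |ρ|) ^ 2) := by gcongr; norm_num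

lemma energyDensity_snd_mul_packet_le {N : ℝ} (hN : 0 ≤ N) (p : ℝ × ℝ) :
    energyDensity (1 / 2) (fun q => (q.2 : ℂ) * packet N q) p ≤
      (1 + N) * packetEnvelope (shearedCoord (2 * N) N (N ^ 2) p) := by
  have hweight := one_add_abs_fst_le_shearedCoord hN (2 * N) (N ^ 2) p
  have hFT : ‖FT2 (fun q => (q.2 : ℂ) * packet N q) p.1 p.2‖ ^ 2 =
      |(shearedCoord (2 * N) N (N ^ 2) p).2| ^ 2 * ‖FT2 (packet N) p.1 p.2‖ ^ 2 := by
    rw [packet, coe_gaussianPacketSchwartz, FT2_snd_mul_gaussianPacket one_half_pos, norm_mul,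
      norm_mul, Complex.norm_I, Complex.norm_real, Real.norm_eq_abs]
    norm_num [mul_pow]
  rw [energyDensity, hFT, ← mul_assoc]
  refine mul_norm_FT2_packet_sq_le ?_
  set η := (shearedCoord (2 * N) N (N ^ 2) p).1
  set ρ := (shearedCoord (2 * N) N (N ^ 2) p).2
  have hη : 1 + |η| ≤ (1 + |η|) ^ 3 := le_self_pow₀ (by linarith [abs_nonneg η]) (by norm_num)
  calc (1 + |p.1|) ^ (2 * (1 / 2) : ℝ) * |ρ| ^ 2 = (1 + |p.1|) * |ρ| ^ 2 := by norm_num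
    _ ≤ 1 * (1 + N) * (1 + |η|) * (1 + |ρ|) ^ 2 := by gcongr <;> linarith
    _ ≤ 4 * (1 + N) * (1 + |η|) ^ 3 * (1 + |ρ|) ^ 2 := by gcongr; norm_num
    _ = 4 * (1 + N) * ((1 + |η|) ^ 3 * (1 + |ρ|) ^ 2) := mul_assoc _ _ _

/- Multiplication by `x` costs a factor `1 + N` in amplitude, which the weight `(1 + |ξ|)⁻¹` in
place of `1 + |ξ|` absorbs. -/
lemma energyDensity_fst_mul_packet_le {N : ℝ} (hN : 0 ≤ N) (p : ℝ × ℝ) :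
    energyDensity (-(1 / 2)) (fun q => (q.1 : ℂ) * packet N q) p ≤
      (1 + N) * packetEnvelope (shearedCoord (2 * N) N (N ^ 2) p) := by
  have hweight : 1 + N ≤ (1 + |p.1|) * (1 + |(shearedCoord (2 * N) N (N ^ 2) p).1|) := by
    simpa only [abs_of_nonneg hN, abs_sub_comm N, shearedCoord] using
      one_add_abs_le_mul_one_add_abs_sub N p.1
  have hFT : ‖FT2 (fun q => (q.1 : ℂ) * packet N q) p.1 p.2‖ ^ 2 =
      |(shearedCoord (2 * N) N (N ^ 2) p).1 - 2 * N * (shearedCoord (2 * N) N (N ^ 2) p).2| ^ 2 *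
        ‖FT2 (packet N) p.1 p.2‖ ^ 2 := by
    rw [packet, coe_gaussianPacketSchwartz, FT2_fst_mul_gaussianPacket one_half_pos one_half_pos,
      norm_mul, norm_mul, Complex.norm_I, Complex.norm_real, Real.norm_eq_abs]
    norm_num [mul_pow]
  rw [energyDensity, hFT, ← mul_assoc]
  refine mul_norm_FT2_packet_sq_le ?_
  set η := (shearedCoord (2 * N) N (N ^ 2) p).1
  set ρ := (shearedCoord (2 * N) N (N ^ 2) p).2
  have hfactor : |η - 2 * N * ρ| ≤ 2 * (1 + N) * ((1 + |η|) * (1 + |ρ|)) := by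
    have htri := abs_sub η (2 * N * ρ)
    rw [abs_mul, abs_of_nonneg (by positivity : 0 ≤ 2 * N)] at htri
    nlinarith [abs_nonneg η, abs_nonneg ρ, mul_nonneg (abs_nonneg η) (abs_nonneg ρ),
      mul_nonneg hN (abs_nonneg η), mul_nonneg hN (mul_nonneg (abs_nonneg η) (abs_nonneg ρ))]
  have hcancel : (1 + N) * (1 + |p.1|)⁻¹ ≤ 1 + |η| := by
    rwa [← div_eq_mul_inv, div_le_iff₀' (by positivity)]
  calc (1 + |p.1|) ^ (2 * -(1 / 2) : ℝ) * |η - 2 * N * ρ| ^ 2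
      = (1 + |p.1|)⁻¹ * |η - 2 * N * ρ| ^ 2 := by norm_num [Real.rpow_neg_one]
    _ ≤ (1 + |p.1|)⁻¹ * (2 * (1 + N) * ((1 + |η|) * (1 + |ρ|))) ^ 2 := by gcongr
    _ = 4 * (1 + N) * ((1 + N) * (1 + |p.1|)⁻¹) * ((1 + |η|) ^ 2 * (1 + |ρ|) ^ 2) := by ring
    _ ≤ 4 * (1 + N) * (1 + |η|) * ((1 + |η|) ^ 2 * (1 + |ρ|) ^ 2) := by gcongr
    _ = 4 * (1 + N) * ((1 + |η|) ^ 3 * (1 + |ρ|) ^ 2) := by ring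

lemma integrable_one_add_abs_pow_mul_packetEnvelope (m n : ℕ) :
    Integrable fun q : ℝ × ℝ => (1 + |q.1|) ^ m * (1 + |q.2|) ^ n * packetEnvelope q := by
  refine (((integrable_one_add_abs_pow_mul_exp one_pos (m + 3)).mul_prod
    (integrable_one_add_abs_pow_mul_exp one_pos (n + 2))).const_mul (16 * Real.pi ^ 2)).congr
    (.of_forall fun q => ?_)
  simp only [packetEnvelope]
  ring

lemma DyadicCutoffs.exists_Xnorm_le_of_energyDensity_le {χ₀ χ : ℝ → ℝ} (h : DyadicCutoffs χ₀ χ) :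
    ∃ K, ∀ (N s : ℝ) (f : ℝ × ℝ → ℂ), 0 ≤ N →
      (∀ p, energyDensity s f p ≤
        (1 + N) * packetEnvelope (shearedCoord (2 * N) N (N ^ 2) p)) →
      Xnorm 0 χ₀ χ (1 / 2) s f ≤ K * √(1 + N) := by
  set H : ℝ × ℝ → ℝ := fun q => (1 + |q.1|) ^ 6 * (1 + |q.2|) ^ 3 * packetEnvelope q
  have hH : Integrable H := integrable_one_add_abs_pow_mul_packetEnvelope 6 3
  refine ⟨√(2 ^ 3 * ∫ q, H q) * (1 - (2 : ℝ) ^ (1 / 2 - (3 : ℕ) / 2 : ℝ))⁻¹,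
    fun N s f hN hle => ?_⟩
  have hshear := measurePreserving_shearedCoord (2 * N) N (N ^ 2)
  refine (h.Xnorm_le (n := 3)
    ((hshear.integrable_comp_of_integrable hH).const_mul (1 + N))
    (fun p => ?_) (by norm_num)).trans_eq ?_
  · set q := shearedCoord (2 * N) N (N ^ 2) p
    calc (1 + |p.2 - disp 0 p.1|) ^ 3 * energyDensity s f p
        ≤ ((1 + |q.1|) ^ 2 * (1 + |q.2|)) ^ 3 * ((1 + N) * packetEnvelope q) := by
          gcongr
          · exact energyDensity_nonneg s f p
          · exact one_add_abs_modulation_le hN p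
          · exact hle p
      _ = (1 + N) * H q := by simp only [H]; ring
  · simp only [Function.comp_apply]
    rw [integral_const_mul, hshear.integral_comp (measurableEmbedding_shearedCoord _ _ _),
      mul_left_comm, ← Real.sqrt_eq_rpow, Real.sqrt_mul (by positivity)]
    ring

lemma DyadicCutoffs.exists_packet_norms_le {χ₀ χ : ℝ → ℝ} (h : DyadicCutoffs χ₀ χ) :
    ∃ K, ∀ N, 0 ≤ N → Xnorm 0 χ₀ χ (1 / 2) (1 / 2) (packet N) ≤ K * √(1 + N) ∧
      Ynorm 0 χ₀ χ (1 / 2) (-(1 / 2)) (1 / 2) (packet N) ≤ K * √(1 + N) := by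
  obtain ⟨K, hK⟩ := h.exists_Xnorm_le_of_energyDensity_le
  refine ⟨2 * K, fun N hN => ?_⟩
  have hX := hK N _ _ hN (energyDensity_packet_le hN)
  have hx := hK N _ _ hN (energyDensity_fst_mul_packet_le hN)
  have ht := hK N _ _ hN (energyDensity_snd_mul_packet_le hN)
  have hX0 : 0 ≤ Xnorm 0 χ₀ χ (1 / 2) (1 / 2) (packet N) := h.Xnorm_nonneg ..
  constructor
  · linarith
  · rw [Ynorm]
    linarith

end Packet

/-! ### The product of two packets -/

section PacketProduct

/-- The product of `packet N` and `packet 0`. The different velocities of its factors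
make it as wide as `N` in the time frequency. -/
def packetProduct (N : ℝ) : SchwartzMap (ℝ × ℝ) ℂ :=
  gaussianPacketSchwartz one_pos (by positivity : 0 < N ^ 2 + 1) N N (N ^ 2)

lemma packetProduct_apply (N : ℝ) (p : ℝ × ℝ) :
    packetProduct N p = packet N p * packet 0 p := by
  simp only [packetProduct, packet, coe_gaussianPacketSchwartz]
  rw [gaussianPacket_mul (by norm_num)]
  congr 1 <;> ring

lemma energyDensity_deriv_fst (s : ℝ) (f : SchwartzMap (ℝ × ℝ) ℂ) (p : ℝ × ℝ) :
    energyDensity s (fun p => deriv (fun x => f (x, p.2)) p.1) p =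
      p.1 ^ 2 * energyDensity s f p := by
  rw [energyDensity, energyDensity, FT2_deriv_fst, norm_mul, norm_neg, norm_mul, Complex.norm_I,
    Complex.norm_real, one_mul, mul_pow, Real.norm_eq_abs, sq_abs]
  ring

lemma energyDensity_packetProduct (N : ℝ) (p : ℝ × ℝ) :
    energyDensity (1 / 2) (packetProduct N) p =
      (1 + |p.1|) * (Real.pi ^ 2 / (N ^ 2 + 1) *
        (Real.exp (-(1 / 2) * (shearedCoord N N (N ^ 2) p).1 ^ 2) *
          Real.exp (-(1 / (2 * (N ^ 2 + 1))) * (shearedCoord N N (N ^ 2) p).2 ^ 2))) := by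
  rw [energyDensity, packetProduct, coe_gaussianPacketSchwartz,
    norm_FT2_gaussianPacket_sq one_pos (by positivity)]
  have hweight : (1 + |p.1|) ^ (2 * (1 / 2) : ℝ) = 1 + |p.1| := by norm_num
  rw [hweight, one_mul]
  congr 4 <;> ring

lemma integrable_energyDensity_deriv_packetProduct {N : ℝ} (hN : 0 ≤ N) :
    Integrable (energyDensity (1 / 2)
      fun p => deriv (fun x => packetProduct N (x, p.2)) p.1) := by
  have hmoment := ((measurePreserving_shearedCoord N N (N ^ 2)).integrable_comp_of_integrable
    ((integrable_one_add_abs_pow_mul_exp one_half_pos 3).mul_prod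
      (integrable_one_add_abs_pow_mul_exp
        (by positivity : 0 < 1 / (2 * (N ^ 2 + 1))) 0))).const_mul
          (Real.pi ^ 2 / (N ^ 2 + 1) * (1 + N) ^ 3)
  simp only [funext (energyDensity_deriv_fst _ _), energyDensity_packetProduct]
  refine hmoment.mono' (by fun_prop) (.of_forall fun p => ?_)
  rw [Real.norm_of_nonneg (by positivity)]
  have hweight := one_add_abs_fst_le_shearedCoord hN N (N ^ 2) p
  simp only [Function.comp_apply, pow_zero, one_mul]
  set q := shearedCoord N N (N ^ 2) p
  have hcube : p.1 ^ 2 * (1 + |p.1|) ≤ (1 + N) ^ 3 * (1 + |q.1|) ^ 3 :=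
    calc p.1 ^ 2 * (1 + |p.1|) ≤ (1 + |p.1|) ^ 2 * (1 + |p.1|) := by
          rw [← sq_abs]; gcongr; linarith
      _ = (1 + |p.1|) ^ 3 := by ring
      _ ≤ ((1 + N) * (1 + |q.1|)) ^ 3 := by gcongr
      _ = (1 + N) ^ 3 * (1 + |q.1|) ^ 3 := mul_pow _ _ _
  rw [← mul_assoc]
  refine (mul_le_mul_of_nonneg_right hcube (by positivity)).trans_eq ?_
  ring

lemma abs_shearedCoord_snd_le {N : ℝ} (hN : 1 ≤ N) {p : ℝ × ℝ} (hp : p.1 ∈ Set.Icc N (N + 1))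
    (hmod : |p.2 - disp 0 p.1| ≤ 2 * N) : |(shearedCoord N N (N ^ 2) p).2| ≤ 4 * N := by
  obtain ⟨hlow, hup⟩ := hp
  have hp0 : 0 ≤ p.1 := by linarith
  rw [disp_zero, abs_of_nonneg hp0, abs_le] at hmod
  simp only [shearedCoord]
  rw [abs_le]
  constructor <;> nlinarith [mul_nonneg (sub_nonneg.2 hlow) (sub_nonneg.2 hup)]

lemma le_energyDensity_deriv_packetProduct {N : ℝ} (hN : 1 ≤ N) {p : ℝ × ℝ}
    (hp : p.1 ∈ Set.Icc N (N + 1)) (hmod : |p.2 - disp 0 p.1| ≤ 2 * N) :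
    Real.exp (-9) * (1 + N) ≤
      energyDensity (1 / 2) (fun p => deriv (fun x => packetProduct N (x, p.2)) p.1) p := by
  have hρ := abs_shearedCoord_snd_le hN hp hmod
  rw [energyDensity_deriv_fst, energyDensity_packetProduct]
  set ρ := (shearedCoord N N (N ^ 2) p).2
  obtain ⟨hlow, hup⟩ := hp
  have hη : (shearedCoord N N (N ^ 2) p).1 ^ 2 ≤ 1 := by
    simp only [shearedCoord]
    nlinarith
  have hexp : Real.exp (-9) ≤ Real.exp (-(1 / 2) * (shearedCoord N N (N ^ 2) p).1 ^ 2) *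
      Real.exp (-(1 / (2 * (N ^ 2 + 1))) * ρ ^ 2) := by
    have hρ' : 1 / (2 * (N ^ 2 + 1)) * ρ ^ 2 ≤ 8 := by
      rw [one_div_mul_eq_div, div_le_iff₀ (by positivity), ← sq_abs]
      nlinarith [abs_nonneg ρ]
    rw [← Real.exp_add]
    exact Real.exp_le_exp.2 (by linarith)
  have hpi : 1 ≤ N ^ 2 * (Real.pi ^ 2 / (N ^ 2 + 1)) := by
    rw [← mul_div_assoc, one_le_div (by positivity)]
    nlinarith [Real.pi_gt_three, mul_le_mul_of_nonneg_left Real.pi_gt_three.le Real.pi_pos.le]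
  calc Real.exp (-9) * (1 + N) = (1 + N) * 1 * Real.exp (-9) := by ring
    _ ≤ (1 + |p.1|) * (p.1 ^ 2 * (Real.pi ^ 2 / (N ^ 2 + 1))) *
          (Real.exp (-(1 / 2) * (shearedCoord N N (N ^ 2) p).1 ^ 2) *
            Real.exp (-(1 / (2 * (N ^ 2 + 1))) * ρ ^ 2)) := by
        gcongr
        · exact hlow.trans (le_abs_self _)
        · refine hpi.trans ?_
          gcongr
    _ = _ := by ring

lemma DyadicCutoffs.exists_mul_le_Xnorm_deriv_packetProduct {χ₀ χ : ℝ → ℝ}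
    (h : DyadicCutoffs χ₀ χ) :
    ∃ c > 0, ∀ J : ℕ, c * J * √(1 + 2 ^ J) ≤ Xnorm 0 χ₀ χ (-(1 / 2)) (1 / 2)
      (fun p => deriv (fun x => packetProduct (2 ^ J) (x, p.2)) p.1) := by
  refine ⟨√(Real.exp (-9) * ∫ z, χ z), Real.sqrt_pos.2 (mul_pos (Real.exp_pos _) h.integral_pos),
    fun J => ?_⟩
  have hle := h.mul_rpow_half_le_Xnorm (J := J) (a := 0)
    (integrable_energyDensity_deriv_packetProduct (N := 2 ^ J) (by positivity))
    (measurableSet_Icc (a := (2 : ℝ) ^ J) (b := 2 ^ J + 1)) (by positivity)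
    (fun p => le_energyDensity_deriv_packetProduct (one_le_pow₀ one_le_two))
  refine le_trans (le_of_eq ?_) hle
  rw [Real.volume_real_Icc_of_le (by linarith), ← Real.sqrt_eq_rpow, mul_right_comm _ (J : ℝ),
    ← Real.sqrt_mul (mul_nonneg (Real.exp_pos _).le h.integral_pos.le), mul_comm _ (J : ℝ)]
  ring_nf

end PacketProduct

lemma mul_add_rpow_half_mul_rpow_half_le {X Y B : ℝ} (hX : 0 ≤ X) (hY : 0 ≤ Y) (hXB : X ≤ B)
    (hYB : Y ≤ B) : X + X ^ ((1 : ℝ) / 2) * Y ^ ((1 : ℝ) / 2) ≤ 2 * B := by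
  have hB : 0 ≤ B := hX.trans hXB
  calc X + X ^ ((1 : ℝ) / 2) * Y ^ ((1 : ℝ) / 2)
      ≤ B + B ^ ((1 : ℝ) / 2) * B ^ ((1 : ℝ) / 2) := by gcongr
    _ = 2 * B := by rw [← Real.sqrt_eq_rpow, Real.mul_self_sqrt hB]; ring

lemma bilinear_bound_le {C X₁ Y₁ B₁ X₂ Y₂ B₂ : ℝ} (hC : 0 ≤ C) (hX₁ : 0 ≤ X₁) (hY₁ : 0 ≤ Y₁)
    (hXB₁ : X₁ ≤ B₁) (hYB₁ : Y₁ ≤ B₁) (hX₂ : 0 ≤ X₂) (hY₂ : 0 ≤ Y₂) (hXB₂ : X₂ ≤ B₂)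
    (hYB₂ : Y₂ ≤ B₂) :
    C * X₁ * (X₂ + X₂ ^ ((1 : ℝ) / 2) * Y₂ ^ ((1 : ℝ) / 2)) +
      C * X₂ * (X₁ + X₁ ^ ((1 : ℝ) / 2) * Y₁ ^ ((1 : ℝ) / 2)) ≤ 4 * C * (B₁ * B₂) := by
  have hB₁ : 0 ≤ B₁ := hX₁.trans hXB₁
  have hB₂ : 0 ≤ B₂ := hX₂.trans hXB₂
  calc _ ≤ C * B₁ * (2 * B₂) + C * B₂ * (2 * B₁) := by
        gcongr
        · exact mul_add_rpow_half_mul_rpow_half_le hX₂ hY₂ hXB₂ hYB₂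
        · exact mul_add_rpow_half_mul_rpow_half_le hX₁ hY₁ hXB₁ hYB₁
    _ = 4 * C * (B₁ * B₂) := by ring

theorem statement13 (χ₀ χ : ℝ → ℝ) (hχ : DyadicCutoffs χ₀ χ) :
    ¬ ∃ C > 0, ∀ u₁ u₂ : SchwartzMap (ℝ × ℝ) ℂ,
      Xnorm 0 χ₀ χ (-(1 / 2)) (1 / 2)
          (fun p : ℝ × ℝ => deriv (fun x => u₁ (x, p.2) * u₂ (x, p.2)) p.1) ≤
        C * Xnorm 0 χ₀ χ (1 / 2) (1 / 2) (fun p => u₁ p) *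
            (Xnorm 0 χ₀ χ (1 / 2) (1 / 2) (fun p => u₂ p) +
              Xnorm 0 χ₀ χ (1 / 2) (1 / 2) (fun p => u₂ p) ^ ((1 : ℝ) / 2) *
                Ynorm 0 χ₀ χ (1 / 2) (-(1 / 2)) (1 / 2) (fun p => u₂ p) ^ ((1 : ℝ) / 2)) +
          C * Xnorm 0 χ₀ χ (1 / 2) (1 / 2) (fun p => u₂ p) *
            (Xnorm 0 χ₀ χ (1 / 2) (1 / 2) (fun p => u₁ p) +
              Xnorm 0 χ₀ χ (1 / 2) (1 / 2) (fun p => u₁ p) ^ ((1 : ℝ) / 2) *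
                Ynorm 0 χ₀ χ (1 / 2) (-(1 / 2)) (1 / 2) (fun p => u₁ p) ^ ((1 : ℝ) / 2)) := by
  rintro ⟨C, hC, hest⟩
  obtain ⟨K, hK⟩ := hχ.exists_packet_norms_le
  obtain ⟨c, hc, hlow⟩ := hχ.exists_mul_le_Xnorm_deriv_packetProduct
  obtain ⟨J, hJ⟩ := exists_nat_gt (4 * C * K ^ 2 / c)
  obtain ⟨hX₁, hY₁⟩ := hK (2 ^ J) (by positivity)
  obtain ⟨hX₂, hY₂⟩ := hK 0 le_rfl
  simp only [add_zero, Real.sqrt_one, mul_one] at hX₂ hY₂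
  have hup : Xnorm 0 χ₀ χ (-(1 / 2)) (1 / 2)
      (fun p => deriv (fun x => packetProduct (2 ^ J) (x, p.2)) p.1) ≤
        4 * C * (K * √(1 + 2 ^ J) * K) := by
    simp only [packetProduct_apply]
    exact (hest (packet (2 ^ J)) (packet 0)).trans <| bilinear_bound_le hC.le
      (hχ.Xnorm_nonneg ..) (hχ.Ynorm_nonneg ..) hX₁ hY₁
      (hχ.Xnorm_nonneg ..) (hχ.Ynorm_nonneg ..) hX₂ hY₂
  have hbounded : c * J ≤ 4 * C * K ^ 2 := by
    have hpos : 0 < √(1 + 2 ^ J : ℝ) := by positivity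
    refine le_of_mul_le_mul_right ?_ hpos
    linarith [(hlow J).trans hup]
  rw [div_lt_iff₀' hc] at hJ
  exact hbounded.not_gt hJ
end
end
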